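/- arXiv:1205.1782 — 10 statements merged into one kernel-verified Lean document; each statement's English description precedes it below -/
import Mathlib

section
/- For every randomized policy π, the state-action occupancy frequency u_π belongs to the set U; that is, u_π ≥ 0 componentwise, Aᵀ u_π = (1−γ)·α, and 1ᵀ u_π = 1 (u_π is a probability distribution on S×A). -/
open Matrix BigOperators

namespace DRADP

variable {S A K : Type*} [Fintype S] [Fintype A] [Fintype K] [DecidableEq S] [DecidableEq A]

/-- A randomized policy: nonnegative with rows summing to one. -/
def isPolicy (π : S → A → ℝ) : Prop :=
  (∀ s a, 0 ≤ π s a) ∧ ∀ s, ∑ a, π s a = 1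

/-- The randomized policy corresponding to a deterministic policy `p : S → A`. -/
def detPol (p : S → A) : S → A → ℝ := fun s a => if a = p s then 1 else 0

/-- Transition matrix `P_π` of a policy. -/
noncomputable def Pmat (P : S → A → S → ℝ) (π : S → A → ℝ) : Matrix S S ℝ :=
  Matrix.of fun s s' => ∑ a, P s a s' * π s a

/-- Reward vector `r_π` of a policy. -/
noncomputable def rvec (r : S → A → ℝ) (π : S → A → ℝ) : S → ℝ :=
  fun s => ∑ a, r s a * π s a

/-- State occupancy frequency `d_π = (1-γ)·∑_t γ^t (P_πᵀ)^t α`. -/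
noncomputable def dOcc (P : S → A → S → ℝ) (α : S → ℝ) (γ : ℝ) (π : S → A → ℝ) : S → ℝ :=
  fun s => (1 - γ) * ∑' t : ℕ, γ ^ t * (((Pmat P π)ᵀ ^ t) *ᵥ α) s

/-- State-action occupancy frequency `u_π(s,a) = d_π(s)·π(s,a)`. -/
noncomputable def uOcc (P : S → A → S → ℝ) (α : S → ℝ) (γ : ℝ) (π : S → A → ℝ) : S × A → ℝ :=
  fun w => dOcc P α γ π w.1 * π w.1 w.2

/-- Value function `v_π = ∑_t γ^t P_π^t r_π`. -/
noncomputable def vVal (P : S → A → S → ℝ) (r : S → A → ℝ) (γ : ℝ) (π : S → A → ℝ) : S → ℝ :=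
  fun s => ∑' t : ℕ, γ ^ t * ((Pmat P π ^ t) *ᵥ rvec r π) s

/-- The return `ρ(π) = αᵀ v_π`. -/
noncomputable def ret (P : S → A → S → ℝ) (r : S → A → ℝ) (α : S → ℝ) (γ : ℝ)
    (π : S → A → ℝ) : ℝ :=
  ∑ s, α s * vVal P r γ π s

/-- The matrix `A` with rows `A((s,a),·) = e_sᵀ − γ·P(s,a,·)`. -/
def Amat (P : S → A → S → ℝ) (γ : ℝ) : Matrix (S × A) S ℝ :=
  Matrix.of fun w s' => (if w.1 = s' then (1 : ℝ) else 0) - γ * P w.1 w.2 s'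

/-- The vector `b(s,a) = r(s,a)`. -/
def bvec (r : S → A → ℝ) : S × A → ℝ := fun w => r w.1 w.2

/-- `U = {u : u ≥ 0, Aᵀu = (1−γ)·α}`. -/
def Uset (P : S → A → S → ℝ) (α : S → ℝ) (γ : ℝ) : Set (S × A → ℝ) :=
  {u | (∀ w, 0 ≤ u w) ∧ (Amat P γ)ᵀ *ᵥ u = fun s => (1 - γ) * α s}

/-- The Bellman operator `L`. -/
noncomputable def bell (P : S → A → S → ℝ) (r : S → A → ℝ) (γ : ℝ) (v : S → ℝ) : S → ℝ :=
  fun s => ⨆ a : A, (r s a + γ * ∑ s', P s a s' * v s')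

/-- A deterministic policy `p` is greedy w.r.t. `v`. -/
def isGreedy (P : S → A → S → ℝ) (r : S → A → ℝ) (γ : ℝ) (p : S → A) (v : S → ℝ) : Prop :=
  ∀ s a, r s a + γ * ∑ s', P s a s' * v s' ≤ r s (p s) + γ * ∑ s', P s (p s) s' * v s'

/-- Approximate occupancy frequencies `Ũ(π)`. -/
def Utilde (P : S → A → S → ℝ) (α : S → ℝ) (γ : ℝ) (Φ : Matrix S K ℝ) (π : S → A → ℝ) :
    Set (S × A → ℝ) :=
  {u | (∀ w, 0 ≤ u w) ∧
    (Φᵀ *ᵥ ((Amat P γ)ᵀ *ᵥ u) = fun j => (1 - γ) * (Φᵀ *ᵥ α) j) ∧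
    ∀ w, u w ≤ π w.1 w.2}

/-- The distributionally robust return estimate
`ρ̃(π) = sup_{v∈Ṽ} (αᵀv − sup_{u∈Ũ(π)} uᵀ(Av − b)/(1−γ))`. -/
noncomputable def rhoTilde (P : S → A → S → ℝ) (r : S → A → ℝ) (α : S → ℝ) (γ : ℝ)
    (Φ : Matrix S K ℝ) (π : S → A → ℝ) : ℝ :=
  ⨆ x : K → ℝ, (∑ s, α s * (Φ *ᵥ x) s -
    sSup ((fun u : S × A → ℝ =>
      (∑ w, u w * ((Amat P γ *ᵥ (Φ *ᵥ x)) w - bvec r w)) / (1 - γ)) ''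
      Utilde P α γ Φ π))

/-- The set `G` of deterministic policies greedy w.r.t. some representable value function. -/
def greedySet (P : S → A → S → ℝ) (r : S → A → ℝ) (γ : ℝ) (Φ : Matrix S K ℝ) :
    Set (S → A → ℝ) :=
  {π | ∃ p : S → A, π = detPol p ∧ ∃ x : K → ℝ, isGreedy P r γ p (Φ *ᵥ x)}

end DRADP

open DRADP

/-- for every randomized policy `π`, `u_π ∈ U` and `u_π` is a
probability distribution on `S × A`. -/
theorem uOcc_mem_Uset {S A : Type*} [Fintype S] [Fintype A] [DecidableEq S]
    (P : S → A → S → ℝ) (α : S → ℝ) (γ : ℝ)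
    (hP : ∀ s a s', 0 ≤ P s a s') (hPsum : ∀ s a, ∑ s', P s a s' = 1)
    (hα : ∀ s, 0 ≤ α s) (hαsum : ∑ s, α s = 1)
    (hγ0 : 0 ≤ γ) (hγ1 : γ < 1)
    (π : S → A → ℝ) (hπ : isPolicy π) :
    uOcc P α γ π ∈ Uset P α γ ∧ ∑ w : S × A, uOcc P α γ π w = 1 := by
  obtain ⟨hπ0, hπ1⟩ := hπ
  have hM0 : ∀ s s', 0 ≤ Pmat P π s s' := fun s s' =>
    Finset.sum_nonneg fun a _ => mul_nonneg (hP s a s') (hπ0 s a)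
  have hM1 : ∀ s, ∑ s', Pmat P π s s' = 1 := by
    intro s
    simp only [Pmat, Matrix.of_apply]
    rw [Finset.sum_comm]
    simp only [← Finset.sum_mul, hPsum, one_mul, hπ1]
  obtain ⟨x, hx⟩ : ∃ x : ℕ → S → ℝ, x = fun t => ((Pmat P π)ᵀ ^ t) *ᵥ α := ⟨_, rfl⟩
  have hx0 : x 0 = α := by simp [hx]
  have hxs : ∀ t s', x (t + 1) s' = ∑ s, Pmat P π s s' * x t s := by
    intro t s'
    have : x (t + 1) = (Pmat P π)ᵀ *ᵥ x t := by
      simp only [hx, Matrix.mulVec_mulVec, pow_succ']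
    rw [this]
    rfl
  have hxn : ∀ t s, 0 ≤ x t s := by
    intro t
    induction t with
    | zero => rw [hx0]; exact hα
    | succ t ih =>
      intro s
      rw [hxs]
      exact Finset.sum_nonneg fun s' _ => mul_nonneg (hM0 _ _) (ih s')
  have hx1 : ∀ t, ∑ s, x t s = 1 := by
    intro t
    induction t with
    | zero => rw [hx0]; exact hαsum
    | succ t ih =>
      simp only [hxs]
      rw [Finset.sum_comm]
      simp only [← Finset.sum_mul, hM1, one_mul, ih]
  have hxle : ∀ t s, x t s ≤ 1 := by
    intro t s
    rw [← hx1 t]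
    exact Finset.single_le_sum (fun i _ => hxn t i) (Finset.mem_univ s)
  have hsum : ∀ s, Summable fun t : ℕ => γ ^ t * x t s := by
    intro s
    refine Summable.of_nonneg_of_le (fun t => mul_nonneg (pow_nonneg hγ0 t) (hxn t s))
      (fun t => ?_) (summable_geometric_of_lt_one hγ0 hγ1)
    exact mul_le_of_le_one_right (pow_nonneg hγ0 t) (hxle t s)
  obtain ⟨T, hT⟩ : ∃ T : S → ℝ, T = fun s => ∑' t : ℕ, γ ^ t * x t s := ⟨_, rfl⟩
  have hd : ∀ s, dOcc P α γ π s = (1 - γ) * T s := by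
    intro s
    simp only [hT, hx, dOcc]
  have hT0 : ∀ s, 0 ≤ T s := by
    intro s
    rw [hT]
    exact tsum_nonneg fun t => mul_nonneg (pow_nonneg hγ0 t) (hxn t s)
  have hTrec : ∀ s', T s' = α s' + γ * ∑ s, Pmat P π s s' * T s := by
    intro s'
    have h1 : T s' = γ ^ 0 * x 0 s' + ∑' t : ℕ, γ ^ (t + 1) * x (t + 1) s' := by
      rw [hT]
      exact (hsum s').tsum_eq_zero_add
    have h2 : ∀ t : ℕ, γ ^ (t + 1) * x (t + 1) s'
        = ∑ s, γ * (Pmat P π s s' * (γ ^ t * x t s)) := by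
      intro t
      rw [hxs, Finset.mul_sum]
      refine Finset.sum_congr rfl fun s _ => ?_
      ring
    rw [h1, hx0]
    simp only [h2]
    rw [Summable.tsum_finsetSum (fun s _ => ((hsum s).mul_left _).mul_left _)]
    simp only [tsum_mul_left, hT, Finset.mul_sum, pow_zero, one_mul]
  have hTsum : ∑ s, T s = (1 - γ)⁻¹ := by
    rw [hT, ← Summable.tsum_finsetSum (fun s _ => hsum s)]
    simp only [← Finset.mul_sum, hx1, mul_one]
    exact tsum_geometric_of_lt_one hγ0 hγ1
  have hne : 1 - γ ≠ 0 := by linarith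
  refine ⟨⟨?_, ?_⟩, ?_⟩
  · intro w
    simp only [uOcc, hd]
    exact mul_nonneg (mul_nonneg (by linarith) (hT0 _)) (hπ0 _ _)
  · funext s'
    have h3 : ((Amat P γ)ᵀ *ᵥ uOcc P α γ π) s'
        = ∑ w : S × A, ((if w.1 = s' then (1 : ℝ) else 0) - γ * P w.1 w.2 s')
          * ((1 - γ) * T w.1 * π w.1 w.2) := by
      simp only [← hd]
      rfl
    rw [h3, Fintype.sum_prod_type]
    have h4 : ∀ s, ∑ a, ((if s = s' then (1 : ℝ) else 0) - γ * P s a s')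
          * ((1 - γ) * T s * π s a)
        = (if s = s' then (1 - γ) * T s else 0) - (1 - γ) * (γ * (Pmat P π s s' * T s)) := by
      intro s
      have h5 : Pmat P π s s' = ∑ a, P s a s' * π s a := rfl
      have h6 : (if s = s' then (1 - γ) * T s else 0)
          = ∑ a, (if s = s' then (1 - γ) * T s else 0) * π s a := by
        rw [← Finset.mul_sum, hπ1, mul_one]
      rw [h6, h5, Finset.sum_mul, Finset.mul_sum, Finset.mul_sum, ← Finset.sum_sub_distrib]
      refine Finset.sum_congr rfl fun a _ => ?_
      split_ifs <;> ring
    simp only [h4]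
    rw [Finset.sum_sub_distrib, ← Finset.mul_sum, ← Finset.mul_sum]
    simp only [Finset.sum_ite_eq', Finset.mem_univ, if_true]
    have := hTrec s'
    linear_combination (1 - γ) * this
  · rw [Fintype.sum_prod_type]
    simp only [uOcc, ← Finset.mul_sum, hπ1, mul_one, hd, hTsum]
    exact mul_inv_cancel₀ hne
end

section
/- Let u ∈ U be such that ∑_{a'∈A} u(s,a') > 0 for every state s, and define the randomized policy π'(s,a) = u(s,a)/∑_{a'∈A} u(s,a'). Then the state-action occupancy frequency of π' equals u, i.e. u_{π'} = u. -/
open Matrix BigOperators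

open DRADP

theorem aux_pow {S : Type*} [Fintype S] [DecidableEq S] (M : Matrix S S ℝ)
    (h0 : ∀ i j, 0 ≤ M i j) (h1 : ∀ j, ∑ i, M i j = 1) (x : S → ℝ) (hx : ∀ i, 0 ≤ x i) (n : ℕ) :
    (∀ i, 0 ≤ ((M ^ n) *ᵥ x) i) ∧ ∑ i, ((M ^ n) *ᵥ x) i = ∑ i, x i := by
  induction n with
  | zero => simpa using hx
  | succ n ih =>
    have e : (M ^ (n+1)) *ᵥ x = M *ᵥ ((M ^ n) *ᵥ x) := by
      rw [Matrix.mulVec_mulVec, pow_succ']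
    rw [e]
    refine ⟨fun i => Finset.sum_nonneg fun j _ => mul_nonneg (h0 i j) (ih.1 j), ?_⟩
    rw [← ih.2]
    simp only [Matrix.mulVec, dotProduct]
    rw [Finset.sum_comm]
    simp only [← Finset.sum_mul, h1, one_mul]

theorem aux_sum {S : Type*} [Fintype S] [DecidableEq S] (M : Matrix S S ℝ)
    (h0 : ∀ i j, 0 ≤ M i j) (h1 : ∀ j, ∑ i, M i j = 1) (α d : S → ℝ) (γ : ℝ)
    (hγ0 : 0 ≤ γ) (hγ1 : γ < 1) (hα : ∀ i, 0 ≤ α i) (hd : ∀ i, 0 ≤ d i)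
    (h : d - γ • (M *ᵥ d) = (1 - γ) • α) (s : S) :
    (1 - γ) * ∑' t : ℕ, γ ^ t * ((M ^ t) *ᵥ α) s = d s := by
  have hg : (0:ℝ) < 1 - γ := by linarith
  have key : ∀ n : ℕ, ∑ t ∈ Finset.range n, (1 - γ) * (γ ^ t * ((M ^ t) *ᵥ α) s)
      = d s - γ ^ n * ((M ^ n) *ᵥ d) s := by
    intro n
    induction n with
    | zero => simp
    | succ n ih =>
      rw [Finset.sum_range_succ, ih]
      have e := congrFun (congrArg (fun v => (M ^ n) *ᵥ v) h) s
      simp only [Matrix.mulVec_sub, Matrix.mulVec_smul, Matrix.mulVec_mulVec, ← pow_succ,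
        Pi.sub_apply, Pi.smul_apply, smul_eq_mul] at e
      rw [pow_succ γ]
      linear_combination (-γ ^ n) * e
  have lim0 : Filter.Tendsto (fun n : ℕ => γ ^ n * ((M ^ n) *ᵥ d) s) Filter.atTop (nhds 0) := by
    have l1 := (tendsto_pow_atTop_nhds_zero_of_lt_one hγ0 hγ1).mul_const (∑ i, d i)
    rw [zero_mul] at l1
    refine squeeze_zero (fun n => mul_nonneg (pow_nonneg hγ0 n) ((aux_pow M h0 h1 d hd n).1 s))
      (fun n => mul_le_mul_of_nonneg_left ?_ (pow_nonneg hγ0 n)) l1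
    rw [← (aux_pow M h0 h1 d hd n).2]
    exact Finset.single_le_sum (f := fun i => ((M ^ n) *ᵥ d) i)
      (fun i _ => (aux_pow M h0 h1 d hd n).1 i) (Finset.mem_univ s)
  rw [← tsum_mul_left]
  refine HasSum.tsum_eq ?_
  rw [hasSum_iff_tendsto_nat_of_nonneg (fun t => mul_nonneg hg.le
    (mul_nonneg (pow_nonneg hγ0 t) ((aux_pow M h0 h1 α hα t).1 s)))]
  simp only [key]
  simpa using lim0.const_sub (d s)

/-- if `u ∈ U` has positive marginals, then the occupancy frequency of the
policy `π'(s,a) = u(s,a)/∑_{a'} u(s,a')` equals `u`. -/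
theorem uOcc_of_mem_Uset {S A : Type*} [Fintype S] [Fintype A] [DecidableEq S]
    (P : S → A → S → ℝ) (α : S → ℝ) (γ : ℝ)
    (hP : ∀ s a s', 0 ≤ P s a s') (hPsum : ∀ s a, ∑ s', P s a s' = 1)
    (hα : ∀ s, 0 ≤ α s) (hαsum : ∑ s, α s = 1)
    (hγ0 : 0 ≤ γ) (hγ1 : γ < 1)
    (u : S × A → ℝ) (hu : u ∈ Uset P α γ)
    (hpos : ∀ s, 0 < ∑ a' : A, u (s, a')) :
    uOcc P α γ (fun s a => u (s, a) / ∑ a' : A, u (s, a')) = u := by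
  obtain ⟨hu0, hu1⟩ := hu
  funext ⟨s, a⟩
  have hne : ∀ s, (∑ a' : A, u (s, a')) ≠ 0 := fun s => (hpos s).ne'
  have hd := aux_sum (Pmat P (fun s a => u (s, a) / ∑ a' : A, u (s, a')))ᵀ
    (fun i j => Finset.sum_nonneg fun a _ => mul_nonneg (hP _ _ _)
      (div_nonneg (hu0 _) (hpos _).le))
    (fun j => by
      simp only [Pmat, Matrix.transpose_apply, Matrix.of_apply]
      rw [Finset.sum_comm]
      simp only [← Finset.sum_mul, hPsum, one_mul]
      rw [← Finset.sum_div, div_self (hne j)])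
    α (fun s => ∑ a' : A, u (s, a')) γ hγ0 hγ1 hα (fun s => (hpos s).le)
    (by
      funext s'
      have e := congrFun hu1 s'
      simp only [Matrix.mulVec, dotProduct, Matrix.transpose_apply, Amat, Matrix.of_apply,
        Fintype.sum_prod_type, sub_mul, Finset.sum_sub_distrib] at e
      simp only [Pi.sub_apply, Pi.smul_apply, smul_eq_mul, Matrix.mulVec, dotProduct,
        Matrix.transpose_apply, Pmat, Matrix.of_apply]
      rw [sub_mul 1 γ, ← e]
      congr 1
      · rw [Finset.sum_eq_single s']
        · simp
        · intro b _ hb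
          simp [hb]
        · simp
      · rw [Finset.mul_sum]
        refine Finset.sum_congr rfl fun i _ => ?_
        rw [Finset.sum_mul, Finset.mul_sum]
        refine Finset.sum_congr rfl fun a _ => ?_
        have := hne i
        field_simp) s
  simp only [uOcc, dOcc]
  rw [hd]
  exact mul_div_cancel₀ _ (hne s)
end

section
/- The set U equals the set of state-action occupancy frequencies of randomized policies, U = ⋃_{π∈Π_R} {u_π}, and it also equals the convex hull of the occupancy frequencies of deterministic policies, U = convexHull {u_π : π ∈ Π_D}. -/
open Matrix BigOperators

open DRADP

section helpers
variable {S A : Type*} [Fintype S] [Fintype A] [DecidableEq S] [DecidableEq A]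

lemma mem_Uset_iff (P : S → A → S → ℝ) (α : S → ℝ) (γ : ℝ) (u : S × A → ℝ) :
    u ∈ Uset P α γ ↔ (∀ w, 0 ≤ u w) ∧ ∀ s', ∑ a, u (s', a) =
      (1 - γ) * α s' + γ * ∑ s, ∑ a, P s a s' * u (s, a) := by
  unfold Uset
  simp only [Set.mem_setOf_eq, funext_iff]
  refine and_congr Iff.rfl (forall_congr' fun s' => ?_)
  have : ((Amat P γ)ᵀ *ᵥ u) s' = ∑ a, u (s', a) - γ * ∑ s, ∑ a, P s a s' * u (s, a) := by
    simp only [Matrix.mulVec, dotProduct, Matrix.transpose_apply, Amat, Matrix.of_apply, sub_mul,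
      Finset.sum_sub_distrib, Fintype.sum_prod_type]
    congr 1
    · rw [Finset.sum_eq_single s']
      · simp
      · intro b _ hb; simp [hb]
      · simp
    · simp only [Finset.mul_sum, mul_assoc]
  rw [this]
  constructor <;> intro h <;> linarith

lemma Uset_convex (P : S → A → S → ℝ) (α : S → ℝ) (γ : ℝ) : Convex ℝ (Uset P α γ) := by
  intro u hu v hv a b ha hb hab
  refine ⟨fun w => ?_, ?_⟩
  · have := hu.1 w; have := hv.1 w
    simp only [Pi.add_apply, Pi.smul_apply, smul_eq_mul]; positivity
  · rw [Matrix.mulVec_add, Matrix.mulVec_smul, Matrix.mulVec_smul, hu.2, hv.2, ← add_smul, hab,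
      one_smul]

lemma iter_prob (P : S → A → S → ℝ) (α : S → ℝ)
    (hP : ∀ s a s', 0 ≤ P s a s') (hPsum : ∀ s a, ∑ s', P s a s' = 1)
    (hα : ∀ s, 0 ≤ α s) (hαsum : ∑ s, α s = 1) (π : S → A → ℝ) (hπ : isPolicy π) (t : ℕ) :
    (∀ s, 0 ≤ (((Pmat P π)ᵀ ^ t) *ᵥ α) s) ∧ ∑ s, (((Pmat P π)ᵀ ^ t) *ᵥ α) s = 1 := by
  induction t with
  | zero => simpa using ⟨hα, hαsum⟩
  | succ t ih =>
    rw [pow_succ', ← Matrix.mulVec_mulVec]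
    generalize ((Pmat P π)ᵀ ^ t) *ᵥ α = x at ih
    constructor
    · intro s
      exact Finset.sum_nonneg fun i _ => mul_nonneg
        (Finset.sum_nonneg fun a _ => mul_nonneg (hP _ _ _) (hπ.1 _ _)) (ih.1 i)
    · simp only [Matrix.mulVec, dotProduct, Matrix.transpose_apply, Pmat, Matrix.of_apply]
      rw [Finset.sum_comm]
      simp_rw [← Finset.sum_mul]
      rw [← ih.2]
      refine Finset.sum_congr rfl fun s _ => ?_
      rw [Finset.sum_comm]
      simp_rw [← Finset.sum_mul, hPsum, one_mul, hπ.2, one_mul]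

lemma term_summable (P : S → A → S → ℝ) (α : S → ℝ) (γ : ℝ)
    (hP : ∀ s a s', 0 ≤ P s a s') (hPsum : ∀ s a, ∑ s', P s a s' = 1)
    (hα : ∀ s, 0 ≤ α s) (hαsum : ∑ s, α s = 1)
    (hγ0 : 0 ≤ γ) (hγ1 : γ < 1) (π : S → A → ℝ) (hπ : isPolicy π) (s : S) :
    Summable fun t : ℕ => γ ^ t * (((Pmat P π)ᵀ ^ t) *ᵥ α) s := by
  have h := iter_prob P α hP hPsum hα hαsum π hπ
  refine Summable.of_nonneg_of_le (fun t => mul_nonneg (pow_nonneg hγ0 t) ((h t).1 s))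
    (fun t => ?_) (summable_geometric_of_lt_one hγ0 hγ1)
  refine mul_le_of_le_one_right (pow_nonneg hγ0 t) ?_
  rw [← (h t).2]
  exact Finset.single_le_sum (fun i _ => (h t).1 i) (Finset.mem_univ s)

lemma dOcc_flow (P : S → A → S → ℝ) (α : S → ℝ) (γ : ℝ)
    (hP : ∀ s a s', 0 ≤ P s a s') (hPsum : ∀ s a, ∑ s', P s a s' = 1)
    (hα : ∀ s, 0 ≤ α s) (hαsum : ∑ s, α s = 1)
    (hγ0 : 0 ≤ γ) (hγ1 : γ < 1) (π : S → A → ℝ) (hπ : isPolicy π) (s' : S) :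
    dOcc P α γ π s' = (1 - γ) * α s' + γ * ∑ s, Pmat P π s s' * dOcc P α γ π s := by
  have hs := term_summable P α γ hP hPsum hα hαsum hγ0 hγ1 π hπ
  unfold dOcc
  rw [(hs s').tsum_eq_zero_add]
  have : ∀ t : ℕ, γ ^ (t + 1) * (((Pmat P π)ᵀ ^ (t + 1)) *ᵥ α) s' =
      γ * ∑ s, Pmat P π s s' * (γ ^ t * (((Pmat P π)ᵀ ^ t) *ᵥ α) s) := by
    intro t
    rw [pow_succ' (Pmat P π)ᵀ, ← Matrix.mulVec_mulVec]
    generalize ((Pmat P π)ᵀ ^ t) *ᵥ α = x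
    simp only [Matrix.mulVec, dotProduct, Matrix.transpose_apply, Finset.mul_sum]
    refine Finset.sum_congr rfl fun s _ => by ring
  simp_rw [this]
  rw [tsum_mul_left, Summable.tsum_finsetSum (fun s _ => (hs s).mul_left _)]
  simp_rw [tsum_mul_left]
  have e : ∀ s, Pmat P π s s' * ((1 - γ) * ∑' t : ℕ, γ ^ t * (((Pmat P π)ᵀ ^ t) *ᵥ α) s)
    = (1 - γ) * (Pmat P π s s' * ∑' t : ℕ, γ ^ t * (((Pmat P π)ᵀ ^ t) *ᵥ α) s) := fun s => by ring
  simp_rw [e, ← Finset.mul_sum]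
  simp
  ring

lemma dOcc_nonneg (P : S → A → S → ℝ) (α : S → ℝ) (γ : ℝ)
    (hP : ∀ s a s', 0 ≤ P s a s') (hPsum : ∀ s a, ∑ s', P s a s' = 1)
    (hα : ∀ s, 0 ≤ α s) (hαsum : ∑ s, α s = 1)
    (hγ0 : 0 ≤ γ) (hγ1 : γ < 1) (π : S → A → ℝ) (hπ : isPolicy π) (s : S) :
    0 ≤ dOcc P α γ π s :=
  mul_nonneg (by linarith) (tsum_nonneg fun t => mul_nonneg (pow_nonneg hγ0 t)
    ((iter_prob P α hP hPsum hα hαsum π hπ t).1 s))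

lemma flow_zero (P : S → A → S → ℝ) (γ : ℝ)
    (hP : ∀ s a s', 0 ≤ P s a s') (hPsum : ∀ s a, ∑ s', P s a s' = 1)
    (hγ0 : 0 ≤ γ) (hγ1 : γ < 1) (π : S → A → ℝ) (hπ : isPolicy π) (e : S → ℝ)
    (he : ∀ s', e s' = γ * ∑ s, Pmat P π s s' * e s) (s : S) : e s = 0 := by
  have hp : ∀ s s', 0 ≤ Pmat P π s s' := fun s s' =>
    Finset.sum_nonneg fun a _ => mul_nonneg (hP _ _ _) (hπ.1 _ _)
  have hp1 : ∀ s, ∑ s', Pmat P π s s' = 1 := by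
    intro s
    simp only [Pmat, Matrix.of_apply]
    rw [Finset.sum_comm]
    simp_rw [← Finset.sum_mul, hPsum, one_mul, hπ.2]
  have h1 : ∑ s', |e s'| ≤ γ * ∑ s, |e s| := by
    calc ∑ s', |e s'| ≤ ∑ s', γ * ∑ s, Pmat P π s s' * |e s| := by
          refine Finset.sum_le_sum fun s' _ => ?_
          conv_lhs => rw [he s']
          rw [abs_mul, abs_of_nonneg hγ0]
          refine mul_le_mul_of_nonneg_left ?_ hγ0
          refine (Finset.abs_sum_le_sum_abs _ _).trans (le_of_eq ?_)
          refine Finset.sum_congr rfl fun s _ => ?_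
          rw [abs_mul, abs_of_nonneg (hp _ _)]
      _ = γ * ∑ s, |e s| := by
          rw [← Finset.mul_sum, Finset.sum_comm]
          simp_rw [← Finset.sum_mul, hp1, one_mul]
  have h0 : |e s| ≤ ∑ s, |e s| :=
    Finset.single_le_sum (fun i _ => abs_nonneg (e i)) (Finset.mem_univ s)
  have h2 : ∑ s, |e s| ≤ 0 := by
    by_contra hc
    push Not at hc
    nlinarith
  exact abs_nonpos_iff.mp (h0.trans h2)

lemma eq_uOcc (P : S → A → S → ℝ) (α : S → ℝ) (γ : ℝ)
    (hP : ∀ s a s', 0 ≤ P s a s') (hPsum : ∀ s a, ∑ s', P s a s' = 1)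
    (hα : ∀ s, 0 ≤ α s) (hαsum : ∑ s, α s = 1)
    (hγ0 : 0 ≤ γ) (hγ1 : γ < 1) (π : S → A → ℝ) (hπ : isPolicy π) (u : S × A → ℝ)
    (hu : u ∈ Uset P α γ) (D : S → ℝ) (h : ∀ s a, u (s, a) = D s * π s a) :
    u = uOcc P α γ π := by
  have hu2 := ((mem_Uset_iff P α γ u).1 hu).2
  have hD : ∀ s', D s' = (1 - γ) * α s' + γ * ∑ s, Pmat P π s s' * D s := by
    intro s'
    have := hu2 s'
    simp_rw [h, ← Finset.mul_sum, hπ.2, mul_one] at this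
    rw [this]
    congr 2
    refine Finset.sum_congr rfl fun s _ => ?_
    simp only [Pmat, Matrix.of_apply, Finset.sum_mul]
    exact Finset.sum_congr rfl fun a _ => by ring
  have key := flow_zero P γ hP hPsum hγ0 hγ1 π hπ (fun s => D s - dOcc P α γ π s) (by
    intro s'
    have h1 := hD s'
    have h2 := dOcc_flow P α γ hP hPsum hα hαsum hγ0 hγ1 π hπ s'
    simp only [mul_sub, Finset.sum_sub_distrib]
    linarith)
  funext ⟨s, a⟩
  rw [h, sub_eq_zero.1 (key s)]
  rfl

lemma uOcc_mem (P : S → A → S → ℝ) (α : S → ℝ) (γ : ℝ)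
    (hP : ∀ s a s', 0 ≤ P s a s') (hPsum : ∀ s a, ∑ s', P s a s' = 1)
    (hα : ∀ s, 0 ≤ α s) (hαsum : ∑ s, α s = 1)
    (hγ0 : 0 ≤ γ) (hγ1 : γ < 1) (π : S → A → ℝ) (hπ : isPolicy π) :
    uOcc P α γ π ∈ Uset P α γ := by
  rw [mem_Uset_iff]
  refine ⟨fun w => mul_nonneg (dOcc_nonneg P α γ hP hPsum hα hαsum hγ0 hγ1 π hπ _) (hπ.1 _ _),
    fun s' => ?_⟩
  simp only [uOcc]
  rw [← Finset.mul_sum, hπ.2, mul_one, dOcc_flow P α γ hP hPsum hα hαsum hγ0 hγ1 π hπ s']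
  congr 2
  refine Finset.sum_congr rfl fun s _ => ?_
  simp only [Pmat, Matrix.of_apply, Finset.sum_mul]
  exact Finset.sum_congr rfl fun a _ => by ring

lemma isPolicy_update (π : S → A → ℝ) (hπ : isPolicy π) (s : S) (q : A → ℝ)
    (hq : q ∈ stdSimplex ℝ A) : isPolicy (Function.update π s q) := by
  constructor
  · intro t a
    by_cases h : t = s
    · subst h; simpa using hq.1 a
    · simpa [h] using hπ.1 t a
  · intro t
    by_cases h : t = s
    · subst h; simpa using hq.2
    · simpa [h] using hπ.2 t

lemma isPolicy_detPol (p : S → A) : isPolicy (detPol p) := by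
  constructor
  · intro s a; unfold detPol; split_ifs <;> norm_num
  · intro s; simp [detPol]

lemma convex_row (P : S → A → S → ℝ) (α : S → ℝ) (γ : ℝ)
    (hP : ∀ s a s', 0 ≤ P s a s') (hPsum : ∀ s a, ∑ s', P s a s' = 1)
    (hα : ∀ s, 0 ≤ α s) (hαsum : ∑ s, α s = 1)
    (hγ0 : 0 ≤ γ) (hγ1 : γ < 1) (π : S → A → ℝ) (hπ : isPolicy π) (s : S)
    (H : Set (S × A → ℝ)) (hH : Convex ℝ H) :
    Convex ℝ {q | q ∈ stdSimplex ℝ A ∧ uOcc P α γ (Function.update π s q) ∈ H} := by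
  rintro q ⟨hq, hqH⟩ r ⟨hr, hrH⟩ a b ha hb hab
  have hm : a • q + b • r ∈ stdSimplex ℝ A := convex_stdSimplex ℝ A hq hr ha hb hab
  refine ⟨hm, ?_⟩
  have pq := isPolicy_update π hπ s q hq
  have pr := isPolicy_update π hπ s r hr
  have pm := isPolicy_update π hπ s _ hm
  have nq := dOcc_nonneg P α γ hP hPsum hα hαsum hγ0 hγ1 _ pq s
  have nr := dOcc_nonneg P α γ hP hPsum hα hαsum hγ0 hγ1 _ pr s
  obtain ⟨l, hl0, hl1, hl⟩ : ∃ l : ℝ, 0 ≤ l ∧ l ≤ 1 ∧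
      l * dOcc P α γ (Function.update π s q) s * b =
      (1 - l) * dOcc P α γ (Function.update π s r) s * a := by
    generalize dOcc P α γ (Function.update π s q) s = x at nq
    generalize dOcc P α γ (Function.update π s r) s = y at nr
    have h1 : 0 ≤ a * y := by positivity
    have h2 : 0 ≤ b * x := by positivity
    rcases (add_nonneg h1 h2).eq_or_lt with h | h
    · exact ⟨0, le_rfl, zero_le_one, by nlinarith⟩
    · refine ⟨a * y / (a * y + b * x), by positivity, ?_, ?_⟩
      · rw [div_le_one h]; linarith
      · field_simp; ring
  have e := eq_uOcc P α γ hP hPsum hα hαsum hγ0 hγ1 _ pm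
    (l • uOcc P α γ (Function.update π s q) + (1 - l) • uOcc P α γ (Function.update π s r))
    (Uset_convex P α γ (uOcc_mem P α γ hP hPsum hα hαsum hγ0 hγ1 _ pq)
      (uOcc_mem P α γ hP hPsum hα hαsum hγ0 hγ1 _ pr) hl0 (by linarith) (by ring))
    (fun t => l * dOcc P α γ (Function.update π s q) t
      + (1 - l) * dOcc P α γ (Function.update π s r) t) (by
    intro t c
    simp only [Pi.add_apply, Pi.smul_apply, smul_eq_mul, uOcc]
    by_cases h : t = s
    · subst h
      simp only [Function.update_self, Pi.add_apply, Pi.smul_apply, smul_eq_mul]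
      obtain rfl : b = 1 - a := by linarith
      linear_combination (q c - r c) * hl
    · simp only [Function.update_of_ne h]
      ring)
  rw [← e]
  exact hH hqH hrH hl0 (by linarith) (by ring)

lemma uOcc_mem_hull (P : S → A → S → ℝ) (α : S → ℝ) (γ : ℝ)
    (hP : ∀ s a s', 0 ≤ P s a s') (hPsum : ∀ s a, ∑ s', P s a s' = 1)
    (hα : ∀ s, 0 ≤ α s) (hαsum : ∑ s, α s = 1)
    (hγ0 : 0 ≤ γ) (hγ1 : γ < 1) (T : Finset S) :
    ∀ π : S → A → ℝ, isPolicy π → (∀ s ∉ T, ∃ a, π s = Pi.single a 1) →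
    uOcc P α γ π ∈ convexHull ℝ {u | ∃ p : S → A, u = uOcc P α γ (detPol p)} := by
  induction T using Finset.induction_on with
  | empty =>
    intro π hπ h
    choose p hp using fun s => h s (Finset.notMem_empty s)
    refine subset_convexHull ℝ _ ⟨p, ?_⟩
    congr 1
    funext s a
    rw [hp]
    simp [detPol, Pi.single_apply]
  | insert s T hs ih =>
    intro π hπ h
    have hc := convex_row P α γ hP hPsum hα hαsum hγ0 hγ1 π hπ s _
      (convex_convexHull ℝ {u | ∃ p : S → A, u = uOcc P α γ (detPol p)})
    have hsub : Set.range (fun a : A => (Pi.single a 1 : A → ℝ)) ⊆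
        {q | q ∈ stdSimplex ℝ A ∧ uOcc P α γ (Function.update π s q) ∈
          convexHull ℝ {u | ∃ p : S → A, u = uOcc P α γ (detPol p)}} := by
      rintro _ ⟨a, rfl⟩
      have hmem := single_mem_stdSimplex ℝ a
      refine ⟨hmem, ih _ (isPolicy_update π hπ s _ hmem) ?_⟩
      intro t ht
      by_cases hts : t = s
      · subst hts; exact ⟨a, by simp⟩
      · rw [Function.update_of_ne hts]
        exact h t (by simp [hts, ht])
    have := convexHull_min hsub hc
    rw [convexHull_rangle_single_eq_stdSimplex] at this
    have := (this (show π s ∈ stdSimplex ℝ A from ⟨hπ.1 s, hπ.2 s⟩)).2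
    rwa [Function.update_eq_self] at this

end helpers

/-- `U` equals the set of occupancy frequencies of randomized policies and the
convex hull of the occupancy frequencies of deterministic policies. -/
theorem Uset_eq_occupancies {S A : Type*} [Fintype S] [Fintype A] [DecidableEq S] [DecidableEq A]
    (P : S → A → S → ℝ) (α : S → ℝ) (γ : ℝ)
    (hP : ∀ s a s', 0 ≤ P s a s') (hPsum : ∀ s a, ∑ s', P s a s' = 1)
    (hα : ∀ s, 0 ≤ α s) (hαsum : ∑ s, α s = 1)
    (hγ0 : 0 ≤ γ) (hγ1 : γ < 1) :
    Uset P α γ = {u | ∃ π : S → A → ℝ, isPolicy π ∧ u = uOcc P α γ π} ∧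
    Uset P α γ = convexHull ℝ {u | ∃ p : S → A, u = uOcc P α γ (detPol p)} := by
  have h1 : Uset P α γ = {u | ∃ π : S → A → ℝ, isPolicy π ∧ u = uOcc P α γ π} := by
    apply Set.Subset.antisymm
    · intro u hu
      have hu' := (mem_Uset_iff P α γ u).1 hu
      have hA : Nonempty A := by
        by_contra hA
        rw [not_nonempty_iff] at hA
        have h0 : ∀ s, α s = 0 := by
          intro s
          have := hu'.2 s
          simp at this
          rcases this with h | h
          · linarith
          · exact h
        simp [h0] at hαsum
      obtain ⟨a0⟩ := hA
      set D : S → ℝ := fun s => ∑ a, u (s, a) with hD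
      have hD0 : ∀ s, 0 ≤ D s := fun s => Finset.sum_nonneg fun a _ => hu'.1 _
      let π : S → A → ℝ := fun s a => if D s = 0 then (if a = a0 then 1 else 0) else u (s, a) / D s
      have hπ : isPolicy π := by
        constructor
        · intro s a
          simp only [π]
          split_ifs
          · norm_num
          · norm_num
          · exact div_nonneg (hu'.1 _) (hD0 s)
        · intro s
          by_cases h : D s = 0
          · simp [π, h]
          · simp only [π, h, if_false]
            rw [← Finset.sum_div]
            exact div_self h
      refine ⟨π, hπ, eq_uOcc P α γ hP hPsum hα hαsum hγ0 hγ1 π hπ u hu D fun s a => ?_⟩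
      by_cases h : D s = 0
      · rw [h, zero_mul]
        exact (Finset.sum_eq_zero_iff_of_nonneg (fun a _ => hu'.1 (s, a))).1 h a (Finset.mem_univ a)
      · simp only [π, h, if_false]
        field_simp
    · rintro u ⟨π, hπ, rfl⟩
      exact uOcc_mem P α γ hP hPsum hα hαsum hγ0 hγ1 π hπ
  refine ⟨h1, ?_⟩
  apply Set.Subset.antisymm
  · intro u hu
    rw [h1] at hu
    obtain ⟨π, hπ, rfl⟩ := hu
    exact uOcc_mem_hull P α γ hP hPsum hα hαsum hγ0 hγ1 Finset.univ π hπ (by simp)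
  · refine convexHull_min ?_ (Uset_convex P α γ)
    rintro u ⟨p, rfl⟩
    exact uOcc_mem P α γ hP hPsum hα hαsum hγ0 hγ1 _ (isPolicy_detPol p)
end

section
/- Suppose the all-ones vector 1 lies in the column span of the feature matrix Φ. Then for every randomized policy π and every u ∈ Ũ(π), one has 1ᵀu = 1, i.e. ∑_{(s,a)} u(s,a) = 1. -/
open Matrix BigOperators

open DRADP

/-- if the all-ones vector lies in the column span of `Φ`, then every
`u ∈ Ũ(π)` sums to one. -/
theorem sum_eq_one_of_mem_Utilde {S A K : Type*} [Fintype S] [Fintype A] [Fintype K]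
    [DecidableEq S]
    (P : S → A → S → ℝ) (α : S → ℝ) (γ : ℝ) (Φ : Matrix S K ℝ)
    (hP : ∀ s a s', 0 ≤ P s a s') (hPsum : ∀ s a, ∑ s', P s a s' = 1)
    (hα : ∀ s, 0 ≤ α s) (hαsum : ∑ s, α s = 1)
    (hγ0 : 0 ≤ γ) (hγ1 : γ < 1)
    (hone : ∃ x : K → ℝ, Φ *ᵥ x = fun _ => (1 : ℝ))
    (π : S → A → ℝ) (hπ : isPolicy π)
    (u : S × A → ℝ) (hu : u ∈ Utilde P α γ Φ π) :
    ∑ w : S × A, u w = 1 := by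
  obtain ⟨x, hx⟩ := hone
  obtain ⟨_, h, _⟩ := hu
  have h2 : Φᵀ *ᵥ ((Amat P γ)ᵀ *ᵥ u) = (1 - γ) • (Φᵀ *ᵥ α) := h
  have key : ∀ v : S → ℝ, x ⬝ᵥ (Φᵀ *ᵥ v) = ∑ s, v s := by
    intro v
    rw [Matrix.dotProduct_mulVec, Matrix.vecMul_transpose, hx]
    simp [dotProduct]
  have h3 := congrArg (fun z => x ⬝ᵥ z) h2
  simp only [dotProduct_smul, key, hαsum, smul_eq_mul, mul_one] at h3
  have h4 : ∑ s, ((Amat P γ)ᵀ *ᵥ u) s = (1 - γ) * ∑ w : S × A, u w := by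
    simp only [Matrix.mulVec, dotProduct, Matrix.transpose_apply]
    rw [Finset.sum_comm, Finset.mul_sum]
    refine Finset.sum_congr rfl fun w _ => ?_
    rw [← Finset.sum_mul]
    congr 1
    simp [Amat, Finset.sum_sub_distrib, ← Finset.mul_sum, hPsum]
  rw [h4] at h3
  have h5 : (1 - γ) ≠ 0 := by linarith
  exact mul_left_cancel₀ h5 (by rw [h3, mul_one])
end

section
/- For every randomized policy π, the distributionally robust return estimate lower-bounds the true return: ρ̃(π) ≤ ρ(π); equivalently, for every v ∈ Ṽ, αᵀv − sup_{u∈Ũ(π)} uᵀ(Av − b)/(1−γ) ≤ ρ(π). Moreover, if Φ is the identity matrix on ℝ^S and π is deterministic, then Ũ(π) = {u_π} and ρ̃(π) = ρ(π). -/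
open Matrix BigOperators

open DRADP

namespace DRADP

lemma aux_summable {S : Type*} [Fintype S] [DecidableEq S] (N : Matrix S S ℝ) (x : S → ℝ) (γ C : ℝ)
    (hγ0 : 0 ≤ γ) (hγ1 : γ < 1) (hC : ∀ t s, |((N ^ t) *ᵥ x) s| ≤ C) (s : S) :
    Summable fun t : ℕ => γ ^ t * ((N ^ t) *ᵥ x) s := by
  refine Summable.of_norm_bounded ((summable_geometric_of_lt_one hγ0 hγ1).mul_right C) fun t => ?_
  rw [Real.norm_eq_abs, abs_mul, abs_of_nonneg (pow_nonneg hγ0 t)]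
  exact mul_le_mul_of_nonneg_left (hC t s) (pow_nonneg hγ0 t)

lemma aux_fix {S : Type*} [Fintype S] [DecidableEq S] (N : Matrix S S ℝ) (x : S → ℝ) (γ C : ℝ)
    (hγ0 : 0 ≤ γ) (hγ1 : γ < 1) (hC : ∀ t s, |((N ^ t) *ᵥ x) s| ≤ C) (s : S) :
    (∑' t : ℕ, γ ^ t * ((N ^ t) *ᵥ x) s) =
      x s + γ * ∑ j, N s j * ∑' t : ℕ, γ ^ t * ((N ^ t) *ᵥ x) j := by
  have hs := aux_summable N x γ C hγ0 hγ1 hC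
  rw [(hs s).tsum_eq_zero_add]
  congr 1
  · simp
  · have h1 : HasSum (fun t : ℕ => γ * ∑ j, N s j * (γ ^ t * ((N ^ t) *ᵥ x) j))
        (γ * ∑ j, N s j * ∑' t : ℕ, γ ^ t * ((N ^ t) *ᵥ x) j) :=
      (hasSum_sum fun j _ => (hs j).hasSum.mul_left (N s j)).mul_left γ
    rw [← h1.tsum_eq]
    congr 1
    ext t
    rw [pow_succ' N, ← Matrix.mulVec_mulVec]
    generalize (N ^ t) *ᵥ x = y
    simp only [Matrix.mulVec, dotProduct, Finset.mul_sum]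
    refine Finset.sum_congr rfl fun j _ => ?_
    ring

section
variable {S A : Type*} [Fintype S] [Fintype A] [DecidableEq S] [DecidableEq A]
    (P : S → A → S → ℝ) (r : S → A → ℝ) (α : S → ℝ) (γ : ℝ)
    (hP : ∀ s a s', 0 ≤ P s a s') (hPsum : ∀ s a, ∑ s', P s a s' = 1)
    (hα : ∀ s, 0 ≤ α s) (hαsum : ∑ s, α s = 1)
    (hγ0 : 0 ≤ γ) (hγ1 : γ < 1)
    (π : S → A → ℝ) (hπ : isPolicy π)

include hP hπ in
omit [DecidableEq S] [DecidableEq A] [Fintype S] in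
lemma Pmat_nonneg (s s') : 0 ≤ Pmat P π s s' :=
  Finset.sum_nonneg fun a _ => mul_nonneg (hP s a s') (hπ.1 s a)

include hPsum hπ in
omit [DecidableEq S] [DecidableEq A] in
lemma Pmat_sum (s) : ∑ s', Pmat P π s s' = 1 := by
  simp only [Pmat, Matrix.of_apply]
  rw [Finset.sum_comm]
  simp only [← Finset.sum_mul, hPsum, one_mul, hπ.2]

include hP hPsum hα hαsum hπ in
omit [DecidableEq A] in
lemma occ_prob (t : ℕ) : (∀ s, 0 ≤ (((Pmat P π)ᵀ ^ t) *ᵥ α) s) ∧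
    ∑ s, (((Pmat P π)ᵀ ^ t) *ᵥ α) s = 1 := by
  induction t with
  | zero => simpa using ⟨hα, hαsum⟩
  | succ t ih =>
    rw [pow_succ', ← Matrix.mulVec_mulVec]
    generalize ((Pmat P π)ᵀ ^ t) *ᵥ α = y at ih
    simp only [Matrix.mulVec, dotProduct, Matrix.transpose_apply]
    constructor
    · exact fun s => Finset.sum_nonneg fun j _ => mul_nonneg (Pmat_nonneg P hP π hπ j s) (ih.1 j)
    · rw [Finset.sum_comm]
      simp only [← Finset.sum_mul, Pmat_sum P hPsum π hπ, one_mul, ih.2]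

include hP hPsum hα hαsum hπ in
omit [DecidableEq A] in
lemma occ_bound (t : ℕ) (s : S) : |(((Pmat P π)ᵀ ^ t) *ᵥ α) s| ≤ 1 := by
  obtain ⟨h0, h1⟩ := occ_prob P α hP hPsum hα hαsum π hπ t
  rw [abs_of_nonneg (h0 s), ← h1]
  exact Finset.single_le_sum (fun i _ => h0 i) (Finset.mem_univ s)

include hP hPsum hπ in
omit [DecidableEq A] in
lemma val_bound (x : S → ℝ) (t : ℕ) : ∀ s : S, |((Pmat P π ^ t) *ᵥ x) s| ≤ ∑ j, |x j| := by
  induction t with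
  | zero =>
    intro s
    simpa using Finset.single_le_sum (f := fun j => |x j|) (fun i _ => abs_nonneg _) (Finset.mem_univ s)
  | succ t ih =>
    intro s
    rw [pow_succ', ← Matrix.mulVec_mulVec]
    generalize (Pmat P π ^ t) *ᵥ x = y at ih
    simp only [Matrix.mulVec, dotProduct]
    refine (Finset.abs_sum_le_sum_abs _ _).trans ?_
    calc ∑ j, |Pmat P π s j * y j| ≤ ∑ j, Pmat P π s j * ∑ j, |x j| := by
          refine Finset.sum_le_sum fun j _ => ?_
          rw [abs_mul, abs_of_nonneg (Pmat_nonneg P hP π hπ s j)]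
          exact mul_le_mul_of_nonneg_left (ih j) (Pmat_nonneg P hP π hπ s j)
      _ = _ := by rw [← Finset.sum_mul, Pmat_sum P hPsum π hπ, one_mul]

include hP hPsum hγ0 hγ1 hπ in
omit [DecidableEq A] in
lemma v_fix (s) : vVal P r γ π s = rvec r π s + γ * ∑ j, Pmat P π s j * vVal P r γ π j :=
  aux_fix (Pmat P π) (rvec r π) γ _ hγ0 hγ1 (val_bound P hP hPsum π hπ (rvec r π)) s

include hP hPsum hα hαsum hγ0 hγ1 hπ in
omit [DecidableEq A] in
lemma d_fix (s) : dOcc P α γ π s = (1 - γ) * α s + γ * ∑ j, Pmat P π j s * dOcc P α γ π j := by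
  have h := aux_fix (Pmat P π)ᵀ α γ 1 hγ0 hγ1 (occ_bound P α hP hPsum hα hαsum π hπ) s
  unfold dOcc
  rw [h]
  simp only [Matrix.transpose_apply, mul_add, Finset.mul_sum]
  congr 1
  refine Finset.sum_congr rfl fun j _ => ?_
  ring

include hP hPsum hα hαsum hγ0 hγ1 hπ in
omit [DecidableEq A] in
lemma d_nonneg (s) : 0 ≤ dOcc P α γ π s :=
  mul_nonneg (by linarith) (tsum_nonneg fun t => mul_nonneg (pow_nonneg hγ0 t)
    ((occ_prob P α hP hPsum hα hαsum π hπ t).1 s))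

include hP hPsum hα hαsum hγ0 hγ1 hπ in
omit [DecidableEq A] in
lemma d_sum : ∑ s, dOcc P α γ π s = 1 := by
  have h : ∑ s, dOcc P α γ π s = (1 - γ) + γ * ∑ s, dOcc P α γ π s := by
    conv_lhs => rw [Finset.sum_congr rfl fun s _ => d_fix P α γ hP hPsum hα hαsum hγ0 hγ1 π hπ s]
    rw [Finset.sum_add_distrib, ← Finset.mul_sum, ← Finset.mul_sum, hαsum, Finset.sum_comm]
    simp only [← Finset.sum_mul, Pmat_sum P hPsum π hπ, one_mul, mul_one]
  have : (1 - γ) * (∑ s, dOcc P α γ π s - 1) = 0 := by linarith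
  rcases mul_eq_zero.1 this with h | h <;> linarith

include hP hPsum hα hαsum hγ0 hγ1 hπ in
omit [DecidableEq A] in
lemma d_dot_r : ∑ s, dOcc P α γ π s * rvec r π s = (1 - γ) * ret P r α γ π := by
  have hd := d_fix P α γ hP hPsum hα hαsum hγ0 hγ1 π hπ
  have hv := v_fix P r γ hP hPsum hγ0 hγ1 π hπ
  have e1 : ∑ s, dOcc P α γ π s * rvec r π s = ∑ s, dOcc P α γ π s * vVal P r γ π s -
      γ * ∑ s, ∑ j, Pmat P π s j * dOcc P α γ π s * vVal P r γ π j := by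
    rw [Finset.mul_sum, ← Finset.sum_sub_distrib]
    refine Finset.sum_congr rfl fun s _ => ?_
    have : rvec r π s = vVal P r γ π s - γ * ∑ j, Pmat P π s j * vVal P r γ π j := by
      linarith [hv s]
    rw [this, mul_sub]
    congr 1
    simp only [Finset.mul_sum]
    refine Finset.sum_congr rfl fun j _ => ?_
    ring
  have e2 : (1 - γ) * ret P r α γ π = ∑ s, dOcc P α γ π s * vVal P r γ π s -
      γ * ∑ s, ∑ j, Pmat P π j s * dOcc P α γ π j * vVal P r γ π s := by
    unfold ret
    rw [Finset.mul_sum, Finset.mul_sum, ← Finset.sum_sub_distrib]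
    refine Finset.sum_congr rfl fun s _ => ?_
    have : (1 - γ) * α s = dOcc P α γ π s - γ * ∑ j, Pmat P π j s * dOcc P α γ π j := by
      linarith [hd s]
    rw [← mul_assoc, this, sub_mul, mul_assoc γ, Finset.sum_mul]
  rw [e1, e2]
  congr 2
  exact Finset.sum_comm

omit [DecidableEq A] in
lemma At_apply (u : S × A → ℝ) (s : S) :
    ((Amat P γ)ᵀ *ᵥ u) s = ∑ a, u (s, a) - γ * ∑ j, ∑ a, P j a s * u (j, a) := by
  simp only [Matrix.mulVec, dotProduct, Matrix.transpose_apply, Amat, Matrix.of_apply,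
    Fintype.sum_prod_type, sub_mul, Finset.sum_sub_distrib]
  congr 1
  · rw [Finset.sum_eq_single s]
    · simp
    · intro j _ hj; simp [hj]
    · simp
  · simp only [Finset.mul_sum, mul_assoc]

include hP hPsum hα hαsum hγ0 hγ1 hπ in
omit [DecidableEq A] in
lemma At_uOcc : (Amat P γ)ᵀ *ᵥ uOcc P α γ π = fun s => (1 - γ) * α s := by
  ext s
  rw [At_apply]
  have hd := d_fix P α γ hP hPsum hα hαsum hγ0 hγ1 π hπ s
  simp only [uOcc, ← Finset.mul_sum, hπ.2, mul_one]
  have : ∑ j, ∑ a, P j a s * (dOcc P α γ π j * π j a) = ∑ j, Pmat P π j s * dOcc P α γ π j := by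
    simp only [Pmat, Matrix.of_apply, Finset.sum_mul]
    refine Finset.sum_congr rfl fun j _ => Finset.sum_congr rfl fun a _ => ?_
    ring
  rw [this]; linarith

include hP hPsum hα hαsum hγ0 hγ1 hπ in
omit [DecidableEq A] in
lemma uOcc_mem {K : Type*} [Fintype K] (Φ : Matrix S K ℝ) :
    uOcc P α γ π ∈ Utilde P α γ Φ π := by
  have h0 := d_nonneg P α γ hP hPsum hα hαsum hγ0 hγ1 π hπ
  refine ⟨fun w => mul_nonneg (h0 _) (hπ.1 _ _), ?_, fun w => ?_⟩
  · rw [At_uOcc P α γ hP hPsum hα hαsum hγ0 hγ1 π hπ]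
    exact Matrix.mulVec_smul Φᵀ (1 - γ) α
  · refine mul_le_of_le_one_left (hπ.1 _ _) ?_
    rw [← d_sum P α γ hP hPsum hα hαsum hγ0 hγ1 π hπ]
    exact Finset.single_le_sum (fun i _ => h0 i) (Finset.mem_univ _)

include hP hPsum hα hαsum hγ0 hγ1 hπ in
omit [DecidableEq A] in
lemma obj_uOcc (v : S → ℝ) :
    (∑ w, uOcc P α γ π w * ((Amat P γ *ᵥ v) w - bvec r w)) / (1 - γ) =
      ∑ s, α s * v s - ret P r α γ π := by
  have hne : (1 - γ) ≠ 0 := by linarith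
  rw [div_eq_iff hne]
  simp only [mul_sub, Finset.sum_sub_distrib]
  have e1 : ∑ w, uOcc P α γ π w * (Amat P γ *ᵥ v) w = (1 - γ) * ∑ s, α s * v s := by
    change uOcc P α γ π ⬝ᵥ (Amat P γ *ᵥ v) = _
    rw [Matrix.dotProduct_mulVec, ← Matrix.mulVec_transpose,
      At_uOcc P α γ hP hPsum hα hαsum hγ0 hγ1 π hπ]
    simp only [dotProduct, Finset.mul_sum, mul_assoc]
  have e2 : ∑ w, uOcc P α γ π w * bvec r w = (1 - γ) * ret P r α γ π := by
    rw [← d_dot_r P r α γ hP hPsum hα hαsum hγ0 hγ1 π hπ]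
    simp only [Fintype.sum_prod_type, uOcc, bvec, rvec, Finset.mul_sum]
    refine Finset.sum_congr rfl fun j _ => Finset.sum_congr rfl fun a _ => ?_
    ring
  rw [e1, e2]; ring

include hP hPsum hα hαsum hγ0 hγ1 hπ in
omit [DecidableEq A] in
lemma inner_le {K : Type*} [Fintype K] (Φ : Matrix S K ℝ) (x : K → ℝ) :
      ∑ s, α s * (Φ *ᵥ x) s -
        sSup ((fun u : S × A → ℝ =>
          (∑ w, u w * ((Amat P γ *ᵥ (Φ *ᵥ x)) w - bvec r w)) / (1 - γ)) ''
          Utilde P α γ Φ π) ≤ ret P r α γ π := by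
  have hb : BddAbove ((fun u : S × A → ℝ =>
          (∑ w, u w * ((Amat P γ *ᵥ (Φ *ᵥ x)) w - bvec r w)) / (1 - γ)) ''
          Utilde P α γ Φ π) := by
    refine ⟨(∑ w : S × A, π w.1 w.2 * |(Amat P γ *ᵥ (Φ *ᵥ x)) w - bvec r w|) / (1 - γ), ?_⟩
    rintro _ ⟨u, hu, rfl⟩
    refine div_le_div_of_nonneg_right (Finset.sum_le_sum fun w _ => ?_) (by linarith)
    exact (mul_le_mul_of_nonneg_left (le_abs_self _) (hu.1 w)).trans
      (mul_le_mul_of_nonneg_right (hu.2.2 w) (abs_nonneg _))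
  have h := le_csSup hb ⟨_, uOcc_mem P α γ hP hPsum hα hαsum hγ0 hγ1 π hπ Φ, rfl⟩
  dsimp only at h
  rw [obj_uOcc P r α γ hP hPsum hα hαsum hγ0 hγ1 π hπ] at h
  linarith

omit [DecidableEq S] [Fintype S] in
lemma detPol_isPolicy (p : S → A) : isPolicy (detPol p) := by
  constructor
  · intro s a; unfold detPol; split_ifs <;> norm_num
  · intro s; simp [detPol]

include hP hPsum hα hαsum hγ0 hγ1 in
lemma Utilde_det (p : S → A) :
    Utilde P α γ (1 : Matrix S S ℝ) (detPol p) = {uOcc P α γ (detPol p)} := by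
  have hπ := detPol_isPolicy p
  refine Set.eq_singleton_iff_unique_mem.2
    ⟨uOcc_mem P α γ hP hPsum hα hαsum hγ0 hγ1 _ hπ 1, fun u hu => ?_⟩
  obtain ⟨h0, h1, h2⟩ := hu
  simp only [Matrix.transpose_one, Matrix.one_mulVec] at h1
  have hz : ∀ s a, a ≠ p s → u (s, a) = 0 := fun s a ha =>
    le_antisymm (by simpa [detPol, ha] using h2 (s, a)) (h0 _)
  have hd := d_fix P α γ hP hPsum hα hαsum hγ0 hγ1 _ hπ
  have hM : ∀ s s', Pmat P (detPol p) s s' = P s (p s) s' := by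
    intro s s'; simp [Pmat, detPol]
  have hu : ∀ s, u (s, p s) = (1 - γ) * α s + γ * ∑ j, Pmat P (detPol p) j s * u (j, p j) := by
    intro s
    have := congrFun h1 s
    rw [At_apply] at this
    have e1 : ∑ a, u (s, a) = u (s, p s) :=
      Finset.sum_eq_single _ (fun a _ ha => hz s a ha) (by simp)
    have e2 : ∀ j, ∑ a, P j a s * u (j, a) = Pmat P (detPol p) j s * u (j, p j) := fun j => by
      rw [hM]
      exact Finset.sum_eq_single _ (fun a _ ha => by rw [hz j a ha, mul_zero]) (by simp)
    simp only [e1, e2] at this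
    linarith
  let e : S → ℝ := fun s => u (s, p s) - dOcc P α γ (detPol p) s
  have he : ∀ s, e s = γ * ∑ j, Pmat P (detPol p) j s * e j := by
    intro s
    simp only [e, mul_sub, Finset.sum_sub_distrib]
    have := hu s
    have := hd s
    linarith
  have hle : ∑ s, |e s| ≤ γ * ∑ s, |e s| := by
    calc ∑ s, |e s| ≤ ∑ s, γ * ∑ j, Pmat P (detPol p) j s * |e j| := by
          refine Finset.sum_le_sum fun s _ => ?_
          conv_lhs => rw [he s]
          rw [abs_mul, abs_of_nonneg hγ0]
          refine mul_le_mul_of_nonneg_left ((Finset.abs_sum_le_sum_abs _ _).trans ?_) hγ0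
          refine Finset.sum_le_sum fun j _ => ?_
          rw [abs_mul, abs_of_nonneg (Pmat_nonneg P hP _ hπ j s)]
      _ = _ := by
          rw [← Finset.mul_sum, Finset.sum_comm]
          simp only [← Finset.sum_mul, Pmat_sum P hPsum _ hπ, one_mul]
  have hs0 : 0 ≤ ∑ s, |e s| := Finset.sum_nonneg fun _ _ => abs_nonneg _
  have hs : ∑ s, |e s| = 0 := by nlinarith
  have hez : ∀ s, e s = 0 := fun s =>
    abs_eq_zero.1 ((Finset.sum_eq_zero_iff_of_nonneg fun _ _ => abs_nonneg _).1 hs s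
      (Finset.mem_univ s))
  ext ⟨s, a⟩
  by_cases ha : a = p s
  · subst ha
    have h3 : u (s, p s) - dOcc P α γ (detPol p) s = 0 := hez s
    have h4 : detPol p s (p s) = 1 := by simp [detPol]
    change u (s, p s) = dOcc P α γ (detPol p) s * detPol p s (p s)
    rw [h4]
    linarith
  · rw [hz s a ha]; simp [uOcc, detPol, ha]

end

end DRADP

/-- `ρ̃(π) ≤ ρ(π)` (and each inner expression is at most `ρ(π)`); moreover, if
`Φ` is the identity and the policy is deterministic, `Ũ(π) = {u_π}` and `ρ̃(π) = ρ(π)`. -/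
theorem rhoTilde_le_return {S A K : Type*} [Fintype S] [Fintype A] [Fintype K]
    [DecidableEq S] [DecidableEq A]
    (P : S → A → S → ℝ) (r : S → A → ℝ) (α : S → ℝ) (γ : ℝ) (Φ : Matrix S K ℝ)
    (hP : ∀ s a s', 0 ≤ P s a s') (hPsum : ∀ s a, ∑ s', P s a s' = 1)
    (hα : ∀ s, 0 ≤ α s) (hαsum : ∑ s, α s = 1)
    (hγ0 : 0 ≤ γ) (hγ1 : γ < 1)
    (π : S → A → ℝ) (hπ : isPolicy π) :
    (∀ x : K → ℝ,
      ∑ s, α s * (Φ *ᵥ x) s -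
        sSup ((fun u : S × A → ℝ =>
          (∑ w, u w * ((Amat P γ *ᵥ (Φ *ᵥ x)) w - bvec r w)) / (1 - γ)) ''
          Utilde P α γ Φ π) ≤ ret P r α γ π) ∧
    rhoTilde P r α γ Φ π ≤ ret P r α γ π ∧
    (∀ p : S → A,
      Utilde P α γ (1 : Matrix S S ℝ) (detPol p) = {uOcc P α γ (detPol p)} ∧
      rhoTilde P r α γ (1 : Matrix S S ℝ) (detPol p) = ret P r α γ (detPol p)) := by
  refine ⟨inner_le P r α γ hP hPsum hα hαsum hγ0 hγ1 π hπ Φ,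
    ciSup_le (inner_le P r α γ hP hPsum hα hαsum hγ0 hγ1 π hπ Φ), fun p => ?_⟩
  have hU := Utilde_det P α γ hP hPsum hα hαsum hγ0 hγ1 p
  refine ⟨hU, ?_⟩
  unfold rhoTilde
  simp only [hU, Set.image_singleton, csSup_singleton,
    obj_uOcc P r α γ hP hPsum hα hαsum hγ0 hγ1 _ (detPol_isPolicy p), sub_sub_cancel, ciSup_const]
end

section
/- For every randomized policy π, the distributionally robust return estimate has the simplified form ρ̃(π) = min_{u∈Ũ(π)} bᵀu/(1−γ), where the minimum is attained because Ũ(π) is a nonempty compact set (it contains u_π). -/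
open Matrix BigOperators

open DRADP

theorem exists_occ {S A : Type*} [Fintype S] [Fintype A]
    (P : S → A → S → ℝ) (α : S → ℝ) (γ : ℝ)
    (hP : ∀ s a s', 0 ≤ P s a s') (hPsum : ∀ s a, ∑ s', P s a s' = 1)
    (hα : ∀ s, 0 ≤ α s) (hαsum : ∑ s, α s = 1)
    (hγ0 : 0 ≤ γ) (hγ1 : γ < 1)
    (π : S → A → ℝ) (hπ0 : ∀ s a, 0 ≤ π s a) (hπ1 : ∀ s, ∑ a, π s a = 1) :
    ∃ d : S → ℝ, (∀ s, 0 ≤ d s) ∧ (∀ s, d s ≤ 1) ∧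
      ∀ s', d s' = (1 - γ) * α s' + γ * ∑ s, ∑ a, P s a s' * (d s * π s a) := by
  let T : (S → ℝ) → S → ℝ := fun y s' => ∑ s, ∑ a, P s a s' * (y s * π s a)
  let y : ℕ → S → ℝ := fun t => Nat.rec α (fun _ z => T z) t
  have hys : ∀ t s', y (t+1) s' = ∑ s, ∑ a, P s a s' * (y t s * π s a) := fun t s' => rfl
  have hy0 : ∀ t s, 0 ≤ y t s := by
    intro t
    induction t with
    | zero => exact hα
    | succ t ih =>
      intro s'
      rw [hys]
      exact Finset.sum_nonneg fun s _ => Finset.sum_nonneg fun a _ =>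
        mul_nonneg (hP s a s') (mul_nonneg (ih s) (hπ0 s a))
  have hy1 : ∀ t, ∑ s, y t s = 1 := by
    intro t
    induction t with
    | zero => exact hαsum
    | succ t ih =>
      simp only [hys]
      rw [Finset.sum_comm, ← ih]
      refine Finset.sum_congr rfl fun s _ => ?_
      rw [Finset.sum_comm]
      simp only [← Finset.sum_mul, hPsum, one_mul, ← Finset.mul_sum, hπ1, mul_one]
  have hyle : ∀ t s, y t s ≤ 1 := fun t s => by
    rw [← hy1 t]
    exact Finset.single_le_sum (f := y t) (fun i _ => hy0 t i) (Finset.mem_univ s)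
  have hsum : ∀ s, Summable fun t => γ ^ t * y t s := fun s =>
    Summable.of_nonneg_of_le (fun t => mul_nonneg (pow_nonneg hγ0 t) (hy0 t s))
      (fun t => mul_le_of_le_one_right (pow_nonneg hγ0 t) (hyle t s))
      (summable_geometric_of_lt_one hγ0 hγ1)
  have h1 : 0 < 1 - γ := by linarith
  refine ⟨fun s => (1 - γ) * ∑' t, γ ^ t * y t s, fun s => ?_, fun s => ?_, fun s' => ?_⟩
  · exact mul_nonneg h1.le (tsum_nonneg fun t => mul_nonneg (pow_nonneg hγ0 t) (hy0 t s))
  · have : ∑' t, γ ^ t * y t s ≤ (1 - γ)⁻¹ := by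
      rw [← tsum_geometric_of_lt_one hγ0 hγ1]
      exact (hsum s).tsum_le_tsum
        (fun t => mul_le_of_le_one_right (pow_nonneg hγ0 t) (hyle t s))
        (summable_geometric_of_lt_one hγ0 hγ1)
    calc (1 - γ) * ∑' t, γ ^ t * y t s ≤ (1 - γ) * (1 - γ)⁻¹ := by gcongr
      _ = 1 := mul_inv_cancel₀ h1.ne'
  · have hT : HasSum (fun t => γ ^ (t+1) * y (t+1) s')
        (γ * ∑ s, ∑ a, P s a s' * ((∑' t, γ ^ t * y t s) * π s a)) := by
      have : HasSum (fun t => γ * ∑ s, ∑ a, P s a s' * ((γ ^ t * y t s) * π s a))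
          (γ * ∑ s, ∑ a, P s a s' * ((∑' t, γ ^ t * y t s) * π s a)) :=
        (hasSum_sum fun s _ => hasSum_sum fun a _ =>
          ((hsum s).hasSum.mul_right _).mul_left _).mul_left _
      convert this using 2 with t
      rw [hys]
      simp only [Finset.mul_sum]
      refine Finset.sum_congr rfl fun s _ => Finset.sum_congr rfl fun a _ => ?_
      ring
    have e := (hsum s').tsum_eq_zero_add
    rw [hT.tsum_eq] at e
    have e0 : y 0 s' = α s' := rfl
    beta_reduce
    rw [e, e0, pow_zero, one_mul, mul_add]
    congr 1
    simp only [Finset.mul_sum]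
    refine Finset.sum_congr rfl fun s _ => Finset.sum_congr rfl fun a _ => ?_
    ring

theorem Utilde_nonempty {S A K : Type*} [Fintype S] [Fintype A] [Fintype K] [DecidableEq S]
    (P : S → A → S → ℝ) (α : S → ℝ) (γ : ℝ) (Φ : Matrix S K ℝ)
    (hP : ∀ s a s', 0 ≤ P s a s') (hPsum : ∀ s a, ∑ s', P s a s' = 1)
    (hα : ∀ s, 0 ≤ α s) (hαsum : ∑ s, α s = 1)
    (hγ0 : 0 ≤ γ) (hγ1 : γ < 1)
    (π : S → A → ℝ) (hπ : isPolicy π) : (Utilde P α γ Φ π).Nonempty := by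
  obtain ⟨d, hd0, hd1, hd⟩ := exists_occ P α γ hP hPsum hα hαsum hγ0 hγ1 π hπ.1 hπ.2
  refine ⟨fun w => d w.1 * π w.1 w.2, fun w => mul_nonneg (hd0 _) (hπ.1 _ _), ?_,
    fun w => mul_le_of_le_one_left (hπ.1 _ _) (hd1 _)⟩
  have : (Amat P γ)ᵀ *ᵥ (fun w : S × A => d w.1 * π w.1 w.2) = (1 - γ) • α := by
    ext s'
    simp only [Matrix.mulVec, dotProduct, Matrix.transpose_apply, Amat, Matrix.of_apply,
      Fintype.sum_prod_type, sub_mul, Finset.sum_sub_distrib, ite_mul, one_mul, zero_mul,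
      Pi.smul_apply, smul_eq_mul]
    have h2 : ∑ s, ∑ a, (if s = s' then d s * π s a else 0) = d s' := by
      rw [Finset.sum_eq_single s']
      · simp [← Finset.mul_sum, hπ.2]
      · intro b _ hb
        simp [hb]
      · simp
    rw [h2, hd s']
    simp only [Finset.mul_sum, mul_assoc]
    ring
  rw [this, Matrix.mulVec_smul]
  rfl

theorem Utilde_compact {S A K : Type*} [Fintype S] [Fintype A] [Fintype K] [DecidableEq S]
    (P : S → A → S → ℝ) (α : S → ℝ) (γ : ℝ) (Φ : Matrix S K ℝ)
    (π : S → A → ℝ) : IsCompact (Utilde P α γ Φ π) := by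
  have hc : IsCompact (Set.Icc (0 : S × A → ℝ) (fun w => π w.1 w.2)) := isCompact_Icc
  refine hc.of_isClosed_subset ?_ (fun u hu => ⟨fun w => hu.1 w, fun w => hu.2.2 w⟩)
  have : Utilde P α γ Φ π = Set.Icc (0 : S × A → ℝ) (fun w => π w.1 w.2) ∩
      {u | Φᵀ *ᵥ ((Amat P γ)ᵀ *ᵥ u) = fun j => (1 - γ) * (Φᵀ *ᵥ α) j} := by
    ext u
    exact ⟨fun h => ⟨⟨h.1, h.2.2⟩, h.2.1⟩, fun h => ⟨h.1.1, h.2, h.1.2⟩⟩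
  rw [this]
  refine isClosed_Icc.inter (isClosed_eq ?_ continuous_const)
  exact continuous_const.matrix_mulVec (continuous_const.matrix_mulVec continuous_id)

/-- `ρ̃(π) = min_{u ∈ Ũ(π)} bᵀu/(1−γ)`, the minimum being attained. -/
theorem rhoTilde_eq_min {S A K : Type*} [Fintype S] [Fintype A] [Fintype K] [DecidableEq S]
    (P : S → A → S → ℝ) (r : S → A → ℝ) (α : S → ℝ) (γ : ℝ) (Φ : Matrix S K ℝ)
    (hP : ∀ s a s', 0 ≤ P s a s') (hPsum : ∀ s a, ∑ s', P s a s' = 1)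
    (hα : ∀ s, 0 ≤ α s) (hαsum : ∑ s, α s = 1)
    (hγ0 : 0 ≤ γ) (hγ1 : γ < 1)
    (π : S → A → ℝ) (hπ : isPolicy π) :
    IsLeast ((fun u : S × A → ℝ => (∑ w, bvec r w * u w) / (1 - γ)) '' Utilde P α γ Φ π)
      (rhoTilde P r α γ Φ π) := by
  have h1 : 0 < 1 - γ := by linarith
  have hne := Utilde_nonempty P α γ Φ hP hPsum hα hαsum hγ0 hγ1 π hπ
  have hcont : ContinuousOn (fun u : S × A → ℝ => (∑ w, bvec r w * u w) / (1 - γ))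
      (Utilde P α γ Φ π) := by
    apply Continuous.continuousOn
    fun_prop
  obtain ⟨u₀, hu₀, hmin⟩ := (Utilde_compact P α γ Φ π).exists_isMinOn hne hcont
  have hmin' : ∀ u ∈ Utilde P α γ Φ π,
      (∑ w, bvec r w * u₀ w) / (1 - γ) ≤ (∑ w, bvec r w * u w) / (1 - γ) :=
    fun u hu => hmin hu
  have key : ∀ x : K → ℝ, ∀ u ∈ Utilde P α γ Φ π,
      (∑ w, u w * ((Amat P γ *ᵥ (Φ *ᵥ x)) w - bvec r w)) / (1 - γ) =
        ∑ s, α s * (Φ *ᵥ x) s - (∑ w, bvec r w * u w) / (1 - γ) := by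
    intro x u hu
    have e1 : ∑ w, u w * (Amat P γ *ᵥ (Φ *ᵥ x)) w = (1 - γ) * ∑ s, α s * (Φ *ᵥ x) s := by
      change u ⬝ᵥ (Amat P γ *ᵥ (Φ *ᵥ x)) = (1 - γ) * (α ⬝ᵥ (Φ *ᵥ x))
      have e2 : Φᵀ *ᵥ ((Amat P γ)ᵀ *ᵥ u) = (1 - γ) • (Φᵀ *ᵥ α) := hu.2.1
      rw [Matrix.dotProduct_mulVec, Matrix.dotProduct_mulVec, Matrix.dotProduct_mulVec,
        ← Matrix.mulVec_transpose, ← Matrix.mulVec_transpose, e2, smul_dotProduct,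
        ← Matrix.mulVec_transpose, smul_eq_mul]
    have e3 : ∑ w, u w * bvec r w = ∑ w, bvec r w * u w :=
      Finset.sum_congr rfl fun w _ => mul_comm _ _
    simp only [mul_sub, Finset.sum_sub_distrib]
    rw [e1, e3]
    field_simp
  have hrho : rhoTilde P r α γ Φ π = (∑ w, bvec r w * u₀ w) / (1 - γ) := by
    unfold rhoTilde
    have : ∀ x : K → ℝ, (∑ s, α s * (Φ *ᵥ x) s -
        sSup ((fun u : S × A → ℝ =>
          (∑ w, u w * ((Amat P γ *ᵥ (Φ *ᵥ x)) w - bvec r w)) / (1 - γ)) ''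
          Utilde P α γ Φ π)) = (∑ w, bvec r w * u₀ w) / (1 - γ) := by
      intro x
      have hg : IsGreatest ((fun u : S × A → ℝ =>
          (∑ w, u w * ((Amat P γ *ᵥ (Φ *ᵥ x)) w - bvec r w)) / (1 - γ)) ''
          Utilde P α γ Φ π)
          (∑ s, α s * (Φ *ᵥ x) s - (∑ w, bvec r w * u₀ w) / (1 - γ)) := by
        refine ⟨⟨u₀, hu₀, key x u₀ hu₀⟩, ?_⟩
        rintro _ ⟨u, hu, rfl⟩
        beta_reduce
        rw [key x u hu]
        exact sub_le_sub_left (hmin' u hu) _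
      rw [hg.csSup_eq, sub_sub_cancel]
    simp only [this, ciSup_const]
  rw [hrho]
  refine ⟨⟨u₀, hu₀, rfl⟩, ?_⟩
  rintro _ ⟨u, hu, rfl⟩
  exact hmin' u hu
end

section
/- For every randomized policy π, linear programming duality gives: min_{u∈Ũ(π)} bᵀu/(1−γ) = sup_{x∈ℝ^k} ( αᵀΦx − ∑_{(s,a)} π(s,a)·max(0, (AΦx − b)(s,a)) / (1−γ) ). -/
open Matrix BigOperators

open DRADP


theorem aux_occ {S : Type*} [Fintype S] (Q : S → S → ℝ) (α : S → ℝ) (γ : ℝ)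
    (hQ : ∀ s s', 0 ≤ Q s s') (hQs : ∀ s, ∑ s', Q s s' = 1)
    (hα : ∀ s, 0 ≤ α s) (hαsum : ∑ s, α s = 1) (hγ0 : 0 ≤ γ) (hγ1 : γ < 1) :
    ∃ d : S → ℝ, (∀ s, 0 ≤ d s) ∧ (∀ s, d s ≤ 1) ∧
      ∀ s', d s' = (1 - γ) * α s' + γ * ∑ s, Q s s' * d s := by
  classical
  let x : ℕ → S → ℝ := fun t => Nat.rec α (fun _ y s' => ∑ s, Q s s' * y s) t
  have x0 : x 0 = α := rfl
  have xs : ∀ t s', x (t+1) s' = ∑ s, Q s s' * x t s := fun t s' => rfl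
  have hx : ∀ t, (∀ s, 0 ≤ x t s) ∧ ∑ s, x t s = 1 := by
    intro t
    induction t with
    | zero => exact ⟨hα, hαsum⟩
    | succ t ih =>
      refine ⟨fun s => ?_, ?_⟩
      · rw [xs]
        exact Finset.sum_nonneg fun i _ => mul_nonneg (hQ _ _) (ih.1 i)
      · simp_rw [xs]
        rw [Finset.sum_comm]
        simp_rw [← Finset.sum_mul, hQs, one_mul]
        exact ih.2
  have hx1 : ∀ t s, x t s ≤ 1 := fun t s => by
    rw [← (hx t).2]
    exact Finset.single_le_sum (f := x t) (fun i _ => (hx t).1 i) (Finset.mem_univ s)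
  have hsum : ∀ s, Summable fun t : ℕ => γ ^ t * x t s := fun s =>
    Summable.of_nonneg_of_le (fun t => mul_nonneg (pow_nonneg hγ0 t) ((hx t).1 s))
      (fun t => mul_le_of_le_one_right (pow_nonneg hγ0 t) (hx1 t s))
      (summable_geometric_of_lt_one hγ0 hγ1)
  let D : S → ℝ := fun s => ∑' t : ℕ, γ ^ t * x t s
  have hD : ∀ s, HasSum (fun t : ℕ => γ ^ t * x t s) (D s) := fun s => (hsum s).hasSum
  have hD0 : ∀ s, 0 ≤ D s := fun s =>
    tsum_nonneg fun t => mul_nonneg (pow_nonneg hγ0 t) ((hx t).1 s)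
  have hDs : ∀ s', D s' = α s' + γ * ∑ s, Q s s' * D s := by
    intro s'
    have h1 : HasSum (fun t : ℕ => γ * ∑ s, Q s s' * (γ ^ t * x t s))
        (γ * ∑ s, Q s s' * D s) :=
      (hasSum_sum fun s _ => (hD s).mul_left (Q s s')).mul_left γ
    have h2 : D s' = γ ^ 0 * x 0 s' + ∑' t : ℕ, γ ^ (t+1) * x (t+1) s' :=
      (hsum s').tsum_eq_zero_add
    rw [h2, ← h1.tsum_eq, x0, pow_zero, one_mul]
    congr 2
    funext t
    rw [xs, Finset.mul_sum, Finset.mul_sum]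
    refine Finset.sum_congr rfl fun s _ => ?_
    ring
  have h1γ : 0 < 1 - γ := by linarith
  refine ⟨fun s => (1 - γ) * D s, fun s => mul_nonneg h1γ.le (hD0 s), fun s => ?_, fun s' => ?_⟩
  · have : D s ≤ (1 - γ)⁻¹ := by
      rw [← tsum_geometric_of_lt_one hγ0 hγ1]
      exact (hsum s).tsum_le_tsum (fun t => mul_le_of_le_one_right (pow_nonneg hγ0 t) (hx1 t s))
        (summable_geometric_of_lt_one hγ0 hγ1)
    calc (1 - γ) * D s ≤ (1 - γ) * (1 - γ)⁻¹ := mul_le_mul_of_nonneg_left this h1γ.le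
      _ = 1 := mul_inv_cancel₀ h1γ.ne'
  · simp only
    rw [hDs s', mul_add, Finset.mul_sum, Finset.mul_sum, Finset.mul_sum]
    congr 1
    refine Finset.sum_congr rfl fun s _ => ?_
    ring

theorem aux_weak {W K : Type*} [Fintype W] [Fintype K] (M : Matrix W K ℝ)
    (c : K → ℝ) (b p u : W → ℝ) (h0 : ∀ w, 0 ≤ u w) (hp : ∀ w, u w ≤ p w)
    (hu : Mᵀ *ᵥ u = c) (x : K → ℝ) :
    c ⬝ᵥ x - ∑ w, p w * max 0 ((M *ᵥ x) w - b w) ≤ ∑ w, b w * u w := by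
  have h1 : c ⬝ᵥ x = ∑ w, u w * (M *ᵥ x) w := by
    rw [← hu, Matrix.mulVec_transpose, ← Matrix.dotProduct_mulVec]; rfl
  rw [h1, ← Finset.sum_sub_distrib]
  refine Finset.sum_le_sum fun w _ => ?_
  have h2 : u w * max 0 ((M *ᵥ x) w - b w) ≤ p w * max 0 ((M *ᵥ x) w - b w) :=
    mul_le_mul_of_nonneg_right (hp w) (le_max_left _ _)
  have h3 : u w * ((M *ᵥ x) w - b w) ≤ u w * max 0 ((M *ᵥ x) w - b w) :=
    mul_le_mul_of_nonneg_left (le_max_right _ _) (h0 w)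
  linarith

theorem aux_strong {W K : Type*} [Fintype W] [Fintype K] (M : Matrix W K ℝ)
    (c : K → ℝ) (b p : W → ℝ) (hp : ∀ w, 0 ≤ p w)
    (hne : ∃ u : W → ℝ, (∀ w, 0 ≤ u w) ∧ (∀ w, u w ≤ p w) ∧ Mᵀ *ᵥ u = c)
    (t : ℝ) (ht : ∀ u : W → ℝ, (∀ w, 0 ≤ u w) → (∀ w, u w ≤ p w) → Mᵀ *ᵥ u = c →
      t < ∑ w, b w * u w) :
    ∃ x : K → ℝ, t ≤ c ⬝ᵥ x - ∑ w, p w * max 0 ((M *ᵥ x) w - b w) := by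
  classical
  let L : (W → ℝ) →ₗ[ℝ] (K → ℝ) × ℝ :=
    LinearMap.prod (Matrix.mulVecLin Mᵀ) (dotProductBilin ℝ ℝ b)
  have hL : ∀ u, L u = (Mᵀ *ᵥ u, ∑ w, b w * u w) := fun u => rfl
  have hLc : Continuous L := LinearMap.continuous_of_finiteDimensional L
  have hCc : IsCompact (L '' Set.Icc 0 p) := isCompact_Icc.image hLc
  have hCv : Convex ℝ (L '' Set.Icc 0 p) := (convex_Icc 0 p).linear_image L
  have hDv : Convex ℝ (({c} : Set (K → ℝ)) ×ˢ Set.Iic t) :=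
    (convex_singleton c).prod (convex_Iic t)
  have hDc : IsClosed (({c} : Set (K → ℝ)) ×ˢ Set.Iic t) :=
    isClosed_singleton.prod isClosed_Iic
  have hdisj : Disjoint (L '' Set.Icc 0 p) (({c} : Set (K → ℝ)) ×ˢ Set.Iic t) := by
    rw [Set.disjoint_left]
    rintro _ ⟨u, ⟨hu0, hup⟩, rfl⟩ ⟨h1, h2⟩
    rw [hL] at h1 h2
    exact absurd (ht u hu0 hup h1) (not_lt.2 h2)
  obtain ⟨f, p1, q1, hf1, hpq, hf2⟩ := geometric_hahn_banach_compact_closed hCv hCc hDv hDc hdisj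
  let l : ℝ := f (0, 1)
  let y : K → ℝ := fun k => f (Pi.single k 1, 0)
  have hf : ∀ z s, f (z, s) = z ⬝ᵥ y + s * l := by
    intro z s
    have e : ((z, s) : (K → ℝ) × ℝ) = (∑ k, z k • ((Pi.single k 1, 0) : (K → ℝ) × ℝ)) + s • (0, 1) := by
      ext k
      · simp [Prod.fst_sum, Finset.sum_apply, Pi.single_apply]
      · simp [Prod.snd_sum]
    rw [e, map_add, map_sum, map_smul]
    simp only [map_smul, smul_eq_mul]
    rfl
  have key : ∀ u ∈ Set.Icc 0 p, ∀ s ≤ t,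
      (Mᵀ *ᵥ u) ⬝ᵥ y + (∑ w, b w * u w) * l < c ⬝ᵥ y + s * l := by
    intro u hu s hs
    have h1 := hf1 _ ⟨u, hu, rfl⟩
    have h2 := hf2 (c, s) ⟨rfl, hs⟩
    rw [hL, hf] at h1
    rw [hf] at h2
    linarith
  obtain ⟨u0, h0, h0p, h0c⟩ := hne
  have hl : l < 0 := by
    have h1 := key u0 ⟨h0, h0p⟩ t le_rfl
    have h2 := ht u0 h0 h0p h0c
    rw [h0c] at h1
    by_contra hcon
    push Not at hcon
    nlinarith
  obtain ⟨x, hy⟩ : ∃ x : K → ℝ, y = (-l) • x :=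
    ⟨(-l)⁻¹ • y, by rw [smul_smul, mul_inv_cancel₀ (by linarith), one_smul]⟩
  refine ⟨x, ?_⟩
  let u : W → ℝ := fun w => if 0 ≤ (M *ᵥ x) w - b w then p w else 0
  have hu : u ∈ Set.Icc 0 p := by
    constructor <;> intro w <;> simp only [u] <;> split_ifs <;> simp [hp w]
  have h := key u hu t le_rfl
  rw [hy, dotProduct_smul, dotProduct_smul, Matrix.mulVec_transpose, ← Matrix.dotProduct_mulVec] at h
  simp only [smul_eq_mul] at h
  have h' : 0 < (-l) * (c ⬝ᵥ x - t - (u ⬝ᵥ (M *ᵥ x) - ∑ w, b w * u w)) := by linarith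
  have h3 := pos_of_mul_pos_right h' (by linarith : (0:ℝ) ≤ -l)
  have h4 : u ⬝ᵥ (M *ᵥ x) - ∑ w, b w * u w = ∑ w, p w * max 0 ((M *ᵥ x) w - b w) := by
    rw [dotProduct, ← Finset.sum_sub_distrib]
    refine Finset.sum_congr rfl fun w _ => ?_
    simp only [u]
    split_ifs with hw
    · rw [max_eq_right hw]; ring
    · rw [max_eq_left (by linarith)]; ring
  linarith


/-- LP duality:
`min_{u∈Ũ(π)} bᵀu/(1−γ) = sup_x (αᵀΦx − ∑_{(s,a)} π(s,a)·max(0,(AΦx−b)(s,a))/(1−γ))`. -/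
theorem Utilde_min_duality {S A K : Type*} [Fintype S] [Fintype A] [Fintype K] [DecidableEq S]
    (P : S → A → S → ℝ) (r : S → A → ℝ) (α : S → ℝ) (γ : ℝ) (Φ : Matrix S K ℝ)
    (hP : ∀ s a s', 0 ≤ P s a s') (hPsum : ∀ s a, ∑ s', P s a s' = 1)
    (hα : ∀ s, 0 ≤ α s) (hαsum : ∑ s, α s = 1)
    (hγ0 : 0 ≤ γ) (hγ1 : γ < 1)
    (π : S → A → ℝ) (hπ : isPolicy π) :
    sInf ((fun u : S × A → ℝ => (∑ w, bvec r w * u w) / (1 - γ)) '' Utilde P α γ Φ π) =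
      ⨆ x : K → ℝ, (∑ s, α s * (Φ *ᵥ x) s -
        (∑ w : S × A, π w.1 w.2 * max 0 ((Amat P γ *ᵥ (Φ *ᵥ x)) w - bvec r w)) / (1 - γ)) := by
  classical
  have h1γ : 0 < 1 - γ := by linarith
  set M : Matrix (S × A) K ℝ := Amat P γ * Φ with hM
  let c : K → ℝ := fun j => (1 - γ) * (Φᵀ *ᵥ α) j
  let p : S × A → ℝ := fun w => π w.1 w.2
  have hMt : ∀ u, Mᵀ *ᵥ u = Φᵀ *ᵥ ((Amat P γ)ᵀ *ᵥ u) := fun u => by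
    rw [hM, Matrix.transpose_mul, Matrix.mulVec_mulVec]
  have hMx : ∀ x, Amat P γ *ᵥ (Φ *ᵥ x) = M *ᵥ x := fun x => by
    rw [hM, Matrix.mulVec_mulVec]
  have hc : ∀ x, c ⬝ᵥ x = (1 - γ) * ∑ s, α s * (Φ *ᵥ x) s := fun x => by
    have : c = (1 - γ) • (Φᵀ *ᵥ α) := rfl
    rw [this, smul_dotProduct, Matrix.mulVec_transpose, ← Matrix.dotProduct_mulVec]; rfl
  have hval : ∀ x, ∑ s, α s * (Φ *ᵥ x) s -
        (∑ w : S × A, π w.1 w.2 * max 0 ((Amat P γ *ᵥ (Φ *ᵥ x)) w - bvec r w)) / (1 - γ) =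
      (c ⬝ᵥ x - ∑ w, p w * max 0 ((M *ᵥ x) w - bvec r w)) / (1 - γ) := fun x => by
    rw [hc, hMx, sub_div, mul_div_cancel_left₀ _ h1γ.ne']
  have hne : ∃ u : S × A → ℝ, (∀ w, 0 ≤ u w) ∧ (∀ w, u w ≤ p w) ∧ Mᵀ *ᵥ u = c := by
    obtain ⟨d, hd0, hd1, hd⟩ := aux_occ (fun s s' => ∑ a, P s a s' * π s a) α γ
      (fun s s' => Finset.sum_nonneg fun a _ => mul_nonneg (hP _ _ _) (hπ.1 _ _))
      (fun s => by
        rw [Finset.sum_comm]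
        simp_rw [← Finset.sum_mul, hPsum, one_mul]
        exact hπ.2 s) hα hαsum hγ0 hγ1
    refine ⟨fun w => d w.1 * π w.1 w.2, fun w => mul_nonneg (hd0 _) (hπ.1 _ _),
      fun w => mul_le_of_le_one_left (hπ.1 _ _) (hd1 _), ?_⟩
    have hA : (Amat P γ)ᵀ *ᵥ (fun w : S × A => d w.1 * π w.1 w.2) = (1 - γ) • α := by
      funext s'
      have e1 : ((Amat P γ)ᵀ *ᵥ (fun w : S × A => d w.1 * π w.1 w.2)) s' =
          ∑ s, ∑ a, ((if s = s' then (1 : ℝ) else 0) - γ * P s a s') * (d s * π s a) := by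
        rw [← Fintype.sum_prod_type']; rfl
      have e2 : ∀ s, ∑ a, ((if s = s' then (1 : ℝ) else 0) - γ * P s a s') * (d s * π s a) =
          (if s = s' then d s else 0) - γ * ((∑ a, P s a s' * π s a) * d s) := by
        intro s
        have : (if s = s' then d s else 0) = ∑ a, (if s = s' then d s else 0) * π s a := by
          rw [← Finset.mul_sum, hπ.2, mul_one]
        rw [this, Finset.sum_mul, Finset.mul_sum, ← Finset.sum_sub_distrib]
        refine Finset.sum_congr rfl fun a _ => ?_
        split_ifs <;> ring
      rw [e1, Finset.sum_congr rfl fun s _ => e2 s, Finset.sum_sub_distrib, ← Finset.mul_sum]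
      have := hd s'
      simp only [Finset.sum_ite_eq', Finset.mem_univ, if_true, Pi.smul_apply, smul_eq_mul]
      linarith
    rw [hMt, hA, Matrix.mulVec_smul]
    rfl
  have hUne : ((fun u : S × A → ℝ => (∑ w, bvec r w * u w) / (1 - γ)) ''
      Utilde P α γ Φ π).Nonempty := by
    obtain ⟨u, h0, hp, hu⟩ := hne
    exact ⟨_, u, ⟨h0, (hMt u).symm.trans hu, hp⟩, rfl⟩
  have hweak : ∀ x, ∀ v ∈ ((fun u : S × A → ℝ => (∑ w, bvec r w * u w) / (1 - γ)) ''
      Utilde P α γ Φ π), (c ⬝ᵥ x - ∑ w, p w * max 0 ((M *ᵥ x) w - bvec r w)) / (1 - γ) ≤ v := by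
    rintro x _ ⟨u, ⟨h0, hu, hp⟩, rfl⟩
    exact div_le_div_of_nonneg_right
      (aux_weak M c (bvec r) p u h0 hp ((hMt u).trans hu) x) h1γ.le
  simp_rw [hval]
  apply le_antisymm
  · refine le_of_forall_lt_imp_le_of_dense fun t ht => ?_
    obtain ⟨x, hx⟩ := aux_strong M c (bvec r) p (fun w => hπ.1 _ _) hne (t * (1 - γ))
      (fun u h0 hp hu => by
        rw [← lt_div_iff₀ h1γ]
        refine ht.trans_le (csInf_le ⟨_, hweak 0⟩ ?_)
        exact ⟨u, ⟨h0, (hMt u).symm.trans hu, hp⟩, rfl⟩)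
    rw [← le_div_iff₀ h1γ] at hx
    refine hx.trans (le_ciSup (f := fun x => (c ⬝ᵥ x - ∑ w, p w * max 0 ((M *ᵥ x) w - bvec r w)) / (1 - γ)) ?_ x)
    obtain ⟨v, hv⟩ := hUne
    refine ⟨v, ?_⟩
    rintro _ ⟨x, rfl⟩
    exact hweak x v hv
  · exact ciSup_le fun x => le_csInf hUne (hweak x)
end

section
/- Assume the all-ones vector 1 lies in the column span of Φ. Let G = {π ∈ Π_D : π is greedy with respect to some v ∈ Ṽ}, let Π̃ satisfy G ⊆ Π̃ ⊆ Π_R, and let π̄ ∈ Π̃ satisfy ρ̃(π̄) ≥ ρ̃(π) for all π ∈ Π̃. Then for every v ∈ Ṽ: ‖v* − v_π̄‖_{1,α} ≤ (2/(1−γ))·‖v − Lv‖_∞, where ‖x‖_{1,α} = ∑_s α(s)·|x(s)| and ‖x‖_∞ = max_s |x(s)|. -/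
open Matrix BigOperators

open DRADP

lemma aux_resolvent {S : Type*} [Fintype S] [DecidableEq S] (M : Matrix S S ℝ) (γ : ℝ)
    (hγ0 : 0 ≤ γ) (hγ1 : γ < 1)
    (h0 : ∀ i j, 0 ≤ M i j) (h1 : ∀ i, ∑ j, M i j = 1) :
    ∃ N : Matrix S S ℝ, (∀ i j, 0 ≤ N i j) ∧
      (∀ f s, ∑' t : ℕ, γ ^ t * ((M ^ t) *ᵥ f) s = (N *ᵥ f) s) ∧
      N - γ • (M * N) = 1 ∧ N - γ • (N * M) = 1 := by
  have hpow : ∀ t : ℕ, (∀ i j, 0 ≤ (M ^ t) i j) ∧ ∀ i, ∑ j, (M ^ t) i j = 1 := by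
    intro t
    induction t with
    | zero =>
      constructor
      · intro i j
        rw [pow_zero, Matrix.one_apply]
        split_ifs <;> norm_num
      · intro i
        simp [Matrix.one_apply]
    | succ t ih =>
      constructor
      · intro i j
        rw [pow_succ, Matrix.mul_apply]
        exact Finset.sum_nonneg fun k _ => mul_nonneg (ih.1 i k) (h0 k j)
      · intro i
        simp only [pow_succ, Matrix.mul_apply]
        rw [Finset.sum_comm]
        simp only [← Finset.mul_sum, h1, mul_one, ih.2]
  have hle : ∀ t i j, (M ^ t) i j ≤ 1 := by
    intro t i j
    rw [← (hpow t).2 i]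
    exact Finset.single_le_sum (f := fun j => (M ^ t) i j)
      (fun k _ => (hpow t).1 i k) (Finset.mem_univ j)
  have hsum : ∀ i j, Summable fun t : ℕ => γ ^ t * (M ^ t) i j := by
    intro i j
    refine Summable.of_nonneg_of_le (fun t => mul_nonneg (pow_nonneg hγ0 t) ((hpow t).1 i j))
      (fun t => ?_) (summable_geometric_of_lt_one hγ0 hγ1)
    exact mul_le_of_le_one_right (pow_nonneg hγ0 t) (hle t i j)
  let N : Matrix S S ℝ := Matrix.of fun i j => ∑' t : ℕ, γ ^ t * (M ^ t) i j
  have hN : HasSum (fun t : ℕ => γ ^ t • M ^ t) N := by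
    exact Pi.hasSum.2 fun i => Pi.hasSum.2 fun j => (hsum i j).hasSum
  have hN1 := (hasSum_nat_add_iff' 1).2 hN
  refine ⟨N, fun i j => tsum_nonneg fun t => mul_nonneg (pow_nonneg hγ0 t) ((hpow t).1 i j),
    ?_, ?_, ?_⟩
  · intro f s
    have : HasSum (fun t : ℕ => ∑ j, (γ ^ t * (M ^ t) s j) * f j) (∑ j, N s j * f j) :=
      hasSum_sum fun j _ => (hsum s j).hasSum.mul_right (f j)
    simp only [Matrix.mulVec, dotProduct]
    rw [← this.tsum_eq]
    congr 1
    ext t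
    rw [Finset.mul_sum]
    exact Finset.sum_congr rfl fun j _ => by ring
  · have h2 := (hN.mul_left M).const_smul γ
    have he : (fun n : ℕ => γ ^ (n + 1) • M ^ (n + 1)) = _ := funext fun t => by
      rw [pow_succ, pow_succ', mul_comm (γ ^ t), ← smul_smul, ← mul_smul_comm]
    rw [← he] at h2
    have := hN1.unique h2
    rw [← this]; simp
  · have h2 := (hN.mul_right M).const_smul γ
    have he : (fun n : ℕ => γ ^ (n + 1) • M ^ (n + 1)) = _ := funext fun t => by
      rw [pow_succ, pow_succ, mul_comm (γ ^ t), ← smul_smul, ← smul_mul_assoc]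
    rw [← he] at h2
    have := hN1.unique h2
    rw [← this]; simp

lemma aux_nonneg {S : Type*} [Fintype S] [Nonempty S] (M : S → S → ℝ) (γ : ℝ)
    (hγ0 : 0 ≤ γ) (hγ1 : γ < 1)
    (h0 : ∀ i j, 0 ≤ M i j) (h1 : ∀ i, ∑ j, M i j = 1) (w : S → ℝ)
    (hw : ∀ s, γ * ∑ s', M s s' * w s' ≤ w s) : ∀ s, 0 ≤ w s := by
  obtain ⟨m, hm⟩ := Finite.exists_min w
  have h2 : w m ≤ ∑ s', M m s' * w s' := by
    calc w m = ∑ s', M m s' * w m := by rw [← Finset.sum_mul, h1, one_mul]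
      _ ≤ _ := Finset.sum_le_sum fun s' _ => mul_le_mul_of_nonneg_left (hm s') (h0 m s')
  have h3 := mul_le_mul_of_nonneg_left h2 hγ0
  have h4 := hw m
  have : 0 ≤ w m := by nlinarith
  exact fun s => this.trans (hm s)

lemma aux_le_bell {S A : Type*} [Fintype S] [Fintype A]
    (P : S → A → S → ℝ) (r : S → A → ℝ) (γ : ℝ) (v : S → ℝ) (s : S) (a : A) :
    r s a + γ * ∑ s', P s a s' * v s' ≤ bell P r γ v s :=
  le_ciSup (f := fun a => r s a + γ * ∑ s', P s a s' * v s') (Set.finite_range _).bddAbove a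

lemma aux_greedy {S A : Type*} [Fintype S] [Fintype A] [Nonempty A]
    (P : S → A → S → ℝ) (r : S → A → ℝ) (γ : ℝ) (v : S → ℝ) :
    ∃ p : S → A, isGreedy P r γ p v ∧
      ∀ s, bell P r γ v s = r s (p s) + γ * ∑ s', P s (p s) s' * v s' := by
  have : ∀ s, ∃ a, r s a + γ * ∑ s', P s a s' * v s' = bell P r γ v s := fun s =>
    exists_eq_ciSup_of_finite (f := fun a => r s a + γ * ∑ s', P s a s' * v s')
  choose p hp using this
  refine ⟨p, fun s a => ?_, fun s => (hp s).symm⟩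
  rw [hp s]
  exact aux_le_bell P r γ v s a

lemma aux_Amat {S A : Type*} [Fintype S] [DecidableEq S]
    (P : S → A → S → ℝ) (γ : ℝ) (v : S → ℝ) (w : S × A) :
    (Amat P γ *ᵥ v) w = v w.1 - γ * ∑ s', P w.1 w.2 s' * v s' := by
  simp [Amat, Matrix.mulVec, dotProduct, sub_mul, Finset.sum_sub_distrib, Finset.mul_sum,
    mul_assoc]

/-- Elements of `Utilde` pair with `A Φ x` as occupancy frequencies. -/
lemma aux_pair {S A K : Type*} [Fintype S] [Fintype A] [Fintype K] [DecidableEq S]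
    (P : S → A → S → ℝ) (α : S → ℝ) (γ : ℝ) (Φ : Matrix S K ℝ) (π : S → A → ℝ)
    (u : S × A → ℝ) (hu : u ∈ Utilde P α γ Φ π) (x : K → ℝ) :
    ∑ w, u w * (Amat P γ *ᵥ (Φ *ᵥ x)) w = (1 - γ) * ∑ s, α s * (Φ *ᵥ x) s := by
  have h1 : u ⬝ᵥ (Amat P γ *ᵥ (Φ *ᵥ x)) = (Φᵀ *ᵥ ((Amat P γ)ᵀ *ᵥ u)) ⬝ᵥ x := by
    rw [Matrix.dotProduct_mulVec, Matrix.dotProduct_mulVec, Matrix.mulVec_transpose,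
      Matrix.mulVec_transpose]
  have h2 : α ⬝ᵥ (Φ *ᵥ x) = (Φᵀ *ᵥ α) ⬝ᵥ x := by
    rw [Matrix.dotProduct_mulVec, Matrix.mulVec_transpose]
  change u ⬝ᵥ (Amat P γ *ᵥ (Φ *ᵥ x)) = (1 - γ) * (α ⬝ᵥ (Φ *ᵥ x))
  rw [h1, h2, hu.2.1]
  simp [dotProduct, Finset.mul_sum, mul_assoc]

lemma aux_bdd {S A K : Type*} [Fintype S] [Fintype A] [Fintype K] [DecidableEq S]
    (P : S → A → S → ℝ) (α : S → ℝ) (γ : ℝ) (Φ : Matrix S K ℝ) (π : S → A → ℝ)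
    (hγ1 : γ < 1) (f : S × A → ℝ) :
    BddAbove ((fun u : S × A → ℝ => (∑ w, u w * f w) / (1 - γ)) '' Utilde P α γ Φ π) := by
  refine ⟨(∑ w : S × A, π w.1 w.2 * |f w|) / (1 - γ), ?_⟩
  rintro _ ⟨u, hu, rfl⟩
  refine div_le_div_of_nonneg_right ?_ (by linarith)
  refine Finset.sum_le_sum fun w _ => ?_
  calc u w * f w ≤ u w * |f w| := mul_le_mul_of_nonneg_left (le_abs_self _) (hu.1 w)
    _ ≤ _ := mul_le_mul_of_nonneg_right (hu.2.2 w) (abs_nonneg _)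

/-- Facts about the value and occupancy of a policy. -/
lemma aux_policy {S A : Type*} [Fintype S] [Fintype A] [DecidableEq S]
    (P : S → A → S → ℝ) (r : S → A → ℝ) (α : S → ℝ) (γ : ℝ)
    (hP : ∀ s a s', 0 ≤ P s a s') (hPsum : ∀ s a, ∑ s', P s a s' = 1)
    (hα : ∀ s, 0 ≤ α s) (hαsum : ∑ s, α s = 1)
    (hγ0 : 0 ≤ γ) (hγ1 : γ < 1) (π : S → A → ℝ) (hπ : isPolicy π) :
    (∀ s s', 0 ≤ Pmat P π s s') ∧ (∀ s, ∑ s', Pmat P π s s' = 1) ∧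
    (∀ s, vVal P r γ π s = rvec r π s + γ * ∑ s', Pmat P π s s' * vVal P r γ π s') ∧
    ∃ d : S → ℝ, (∀ s, 0 ≤ d s) ∧ (∀ s, d s ≤ 1) ∧
      ∀ f : S → ℝ, ∑ s, d s * (f s - γ * ∑ s', Pmat P π s s' * f s') =
        (1 - γ) * ∑ s, α s * f s := by
  have h0 : ∀ s s', 0 ≤ Pmat P π s s' := fun s s' =>
    Finset.sum_nonneg fun a _ => mul_nonneg (hP s a s') (hπ.1 s a)
  have h1 : ∀ s, ∑ s', Pmat P π s s' = 1 := by
    intro s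
    simp only [Pmat, Matrix.of_apply]
    rw [Finset.sum_comm]
    simp only [← Finset.sum_mul, hPsum, one_mul, hπ.2]
  obtain ⟨N, hN0, hNt, hN1, hN2⟩ := aux_resolvent (Pmat P π) γ hγ0 hγ1 h0 h1
  refine ⟨h0, h1, ?_, ?_⟩
  · have hv : vVal P r γ π = N *ᵥ rvec r π := by
      ext s; exact hNt _ _
    intro s
    have := congrFun (congrArg (fun Z => Z *ᵥ rvec r π) hN1) s
    simp only [Matrix.sub_mulVec, Matrix.smul_mulVec, ← Matrix.mulVec_mulVec, Matrix.one_mulVec,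
      ← hv] at this
    simp only [Pi.sub_apply, Pi.smul_apply, smul_eq_mul] at this
    change _ = _ + γ * (Pmat P π *ᵥ vVal P r γ π) s
    linarith
  · have key : ∀ f : S → ℝ, ∑ s, ((1 - γ) * (α ᵥ* N) s) *
        (f s - γ * ∑ s', Pmat P π s s' * f s') = (1 - γ) * ∑ s, α s * f s := by
      intro f
      have h3 : (α ᵥ* N) ⬝ᵥ (f - γ • (Pmat P π *ᵥ f)) = α ⬝ᵥ f := by
        rw [← Matrix.dotProduct_mulVec]
        congr 1
        have := congrArg (fun Z => Z *ᵥ f) hN2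
        simp only [Matrix.sub_mulVec, Matrix.smul_mulVec, ← Matrix.mulVec_mulVec,
          Matrix.one_mulVec] at this
        rw [Matrix.mulVec_sub, Matrix.mulVec_smul, this]
      change _ = (1 - γ) * (α ⬝ᵥ f)
      rw [← h3, dotProduct, Finset.mul_sum]
      refine Finset.sum_congr rfl fun s _ => ?_
      simp only [Pi.sub_apply, Pi.smul_apply, smul_eq_mul, Matrix.mulVec, dotProduct]
      ring
    have hd0 : ∀ s, 0 ≤ (1 - γ) * (α ᵥ* N) s := fun s =>
      mul_nonneg (by linarith) (Finset.sum_nonneg fun i _ => mul_nonneg (hα i) (hN0 i s))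
    refine ⟨fun s => (1 - γ) * (α ᵥ* N) s, hd0, ?_, key⟩
    have hs : ∑ s, (1 - γ) * (α ᵥ* N) s = 1 := by
      have := key fun _ => 1
      simp only [mul_one, h1, hαsum] at this
      rw [← Finset.sum_mul] at this
      exact mul_right_cancel₀ (b := 1 - γ) (by linarith) (by linarith)
    intro s
    exact (Finset.single_le_sum (f := fun s => (1 - γ) * (α ᵥ* N) s)
      (fun k _ => hd0 k) (Finset.mem_univ s)).trans_eq hs

lemma aux_swap {S A : Type*} [Fintype S] [Fintype A]
    (P : S → A → S → ℝ) (π : S → A → ℝ) (f : S → ℝ) (s : S) :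
    ∑ s', Pmat P π s s' * f s' = ∑ a, π s a * ∑ s', P s a s' * f s' := by
  simp only [Pmat, Matrix.of_apply, Finset.sum_mul, Finset.mul_sum]
  rw [Finset.sum_comm]
  exact Finset.sum_congr rfl fun a _ => Finset.sum_congr rfl fun s' _ => by ring

/-- Each term in the supremum defining `rhoTilde` is at most the return. -/
lemma aux_upper {S A K : Type*} [Fintype S] [Fintype A] [Fintype K] [DecidableEq S]
    (P : S → A → S → ℝ) (r : S → A → ℝ) (α : S → ℝ) (γ : ℝ) (Φ : Matrix S K ℝ)
    (hP : ∀ s a s', 0 ≤ P s a s') (hPsum : ∀ s a, ∑ s', P s a s' = 1)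
    (hα : ∀ s, 0 ≤ α s) (hαsum : ∑ s, α s = 1)
    (hγ0 : 0 ≤ γ) (hγ1 : γ < 1) (π : S → A → ℝ) (hπ : isPolicy π) (x : K → ℝ) :
    (∑ s, α s * (Φ *ᵥ x) s -
    sSup ((fun u : S × A → ℝ =>
      (∑ w, u w * ((Amat P γ *ᵥ (Φ *ᵥ x)) w - bvec r w)) / (1 - γ)) ''
      Utilde P α γ Φ π)) ≤ ∑ s, α s * vVal P r γ π s := by
  obtain ⟨-, -, hv, d, hd0, hd1, hd⟩ := aux_policy P r α γ hP hPsum hα hαsum hγ0 hγ1 π hπ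
  let u : S × A → ℝ := fun w => d w.1 * π w.1 w.2
  have hA : ∀ f : S → ℝ, u ⬝ᵥ (Amat P γ *ᵥ f) = (1 - γ) * (α ⬝ᵥ f) := by
    intro f
    change _ = (1 - γ) * ∑ s, α s * f s
    rw [← hd f, dotProduct, Fintype.sum_prod_type]
    refine Finset.sum_congr rfl fun s _ => ?_
    rw [aux_swap]
    simp only [aux_Amat, u]
    have : ∑ a, π s a * (f s - γ * ∑ s', P s a s' * f s') =
        f s - γ * ∑ a, π s a * ∑ s', P s a s' * f s' := by
      simp only [mul_sub, Finset.sum_sub_distrib, ← Finset.sum_mul, hπ.2, one_mul]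
      rw [Finset.mul_sum]
      congr 1
      exact Finset.sum_congr rfl fun a _ => by ring
    rw [← this, Finset.mul_sum]
    exact Finset.sum_congr rfl fun a _ => by ring
  have hu : u ∈ Utilde P α γ Φ π := by
    refine ⟨fun w => mul_nonneg (hd0 _) (hπ.1 _ _), ?_,
      fun w => mul_le_of_le_one_left (hπ.1 _ _) (hd1 _)⟩
    have : (Amat P γ)ᵀ *ᵥ u = (1 - γ) • α := by
      apply dotProduct_eq
      intro f
      rw [Matrix.mulVec_transpose, ← Matrix.dotProduct_mulVec, hA, smul_dotProduct, smul_eq_mul]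
    rw [this, Matrix.mulVec_smul]
    rfl
  have hle := le_csSup (aux_bdd P α γ Φ π hγ1 fun w => (Amat P γ *ᵥ (Φ *ᵥ x)) w - bvec r w)
    (Set.mem_image_of_mem _ hu)
  have hb : ∑ w, u w * bvec r w = (1 - γ) * ∑ s, α s * vVal P r γ π s := by
    rw [← hd, Fintype.sum_prod_type]
    refine Finset.sum_congr rfl fun s _ => ?_
    have : vVal P r γ π s - γ * ∑ s', Pmat P π s s' * vVal P r γ π s' = ∑ a, r s a * π s a := by
      have := hv s
      simp only [rvec] at this
      linarith
    rw [this, Finset.mul_sum]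
    exact Finset.sum_congr rfl fun a _ => by simp only [u, bvec]; ring
  have hval : (∑ w, u w * ((Amat P γ *ᵥ (Φ *ᵥ x)) w - bvec r w)) / (1 - γ) =
      ∑ s, α s * (Φ *ᵥ x) s - ∑ s, α s * vVal P r γ π s := by
    simp only [mul_sub, Finset.sum_sub_distrib]
    rw [aux_pair P α γ Φ π u hu x, hb, ← mul_sub, mul_div_cancel_left₀]
    linarith
  simp only [hval] at hle
  linarith

/-- `L∞` error bound for the DRADP-optimal policy:
`‖v* − v_π̄‖_{1,α} ≤ (2/(1−γ))·‖v − Lv‖_∞` for every representable `v`. -/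
theorem dradp_loss_bound_Linf {S A K : Type*} [Fintype S] [Fintype A] [Fintype K]
    [Nonempty S] [Nonempty A] [DecidableEq S] [DecidableEq A]
    (P : S → A → S → ℝ) (r : S → A → ℝ) (α : S → ℝ) (γ : ℝ) (Φ : Matrix S K ℝ)
    (hP : ∀ s a s', 0 ≤ P s a s') (hPsum : ∀ s a, ∑ s', P s a s' = 1)
    (hα : ∀ s, 0 ≤ α s) (hαsum : ∑ s, α s = 1)
    (hγ0 : 0 ≤ γ) (hγ1 : γ < 1)
    (hone : ∃ x : K → ℝ, Φ *ᵥ x = fun _ => (1 : ℝ))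
    (vstar : S → ℝ) (hvstar : bell P r γ vstar = vstar)
    (Pset : Set (S → A → ℝ))
    (hG : greedySet P r γ Φ ⊆ Pset)
    (hR : Pset ⊆ {π | isPolicy π})
    (πb : S → A → ℝ) (hmem : πb ∈ Pset)
    (hopt : ∀ π ∈ Pset, rhoTilde P r α γ Φ π ≤ rhoTilde P r α γ Φ πb) :
    ∀ x : K → ℝ,
      ∑ s, α s * |vstar s - vVal P r γ πb s|
        ≤ (2 / (1 - γ)) * ⨆ s : S, |(Φ *ᵥ x) s - bell P r γ (Φ *ᵥ x) s| := by
  intro x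
  set v := Φ *ᵥ x with hvdef
  set ε := ⨆ s : S, |v s - bell P r γ v s| with hε
  have hγ : 0 < 1 - γ := by linarith
  have hεs : ∀ s, |v s - bell P r γ v s| ≤ ε := fun s =>
    le_ciSup (f := fun s => |v s - bell P r γ v s|) (Set.finite_range _).bddAbove s
  have hε0 : 0 ≤ ε := (abs_nonneg _).trans (hεs (Classical.arbitrary S))
  have hπb : isPolicy πb := hR hmem
  -- the optimal value dominates
  have hdom : ∀ s, 0 ≤ vstar s - vVal P r γ πb s := by
    obtain ⟨h0, h1, hv, -⟩ := aux_policy P r α γ hP hPsum hα hαsum hγ0 hγ1 πb hπb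
    refine aux_nonneg (Pmat P πb) γ hγ0 hγ1 h0 h1 _ fun s => ?_
    simp only [mul_sub, Finset.sum_sub_distrib]
    have h2 : rvec r πb s + γ * ∑ s', Pmat P πb s s' * vstar s' ≤ vstar s := by
      have : rvec r πb s + γ * ∑ s', Pmat P πb s s' * vstar s' =
          ∑ a, πb s a * (r s a + γ * ∑ s', P s a s' * vstar s') := by
        rw [aux_swap, rvec, Finset.mul_sum, ← Finset.sum_add_distrib]
        exact Finset.sum_congr rfl fun a _ => by ring
      rw [this]
      calc _ ≤ ∑ a, πb s a * vstar s := Finset.sum_le_sum fun a _ =>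
            mul_le_mul_of_nonneg_left
              ((aux_le_bell P r γ vstar s a).trans_eq (congrFun hvstar s)) (hπb.1 s a)
        _ = vstar s := by rw [← Finset.sum_mul, hπb.2, one_mul]
    have := hv s
    linarith
  -- v is close to vstar
  have hclose : ∀ s, 0 ≤ v s - vstar s + ε / (1 - γ) := by
    obtain ⟨p, -, hp⟩ := aux_greedy P r γ vstar
    refine aux_nonneg (fun s => P s (p s)) γ hγ0 hγ1 (fun s => hP s (p s))
      (fun s => hPsum s (p s)) _ fun s => ?_
    simp only [mul_sub, mul_add, Finset.sum_sub_distrib, Finset.sum_add_distrib,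
      ← Finset.sum_mul, hPsum, one_mul]
    have h1 := hp s
    rw [hvstar] at h1
    have h2 := aux_le_bell P r γ v s (p s)
    have h3 := (abs_le.1 (hεs s)).1
    have h4 : ε / (1 - γ) - γ * (ε / (1 - γ)) = ε := by field_simp
    linarith
  -- the greedy policy
  obtain ⟨p, hpg, hp⟩ := aux_greedy P r γ v
  have hpmem : detPol p ∈ Pset := hG ⟨p, rfl, x, hpg⟩
  have hpπ : isPolicy (detPol p) := hR hpmem
  have hlow : ∑ s, α s * v s - ε / (1 - γ) ≤ rhoTilde P r α γ Φ (detPol p) := by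
    have hbd : BddAbove (Set.range fun x : K → ℝ => (∑ s, α s * (Φ *ᵥ x) s -
        sSup ((fun u : S × A → ℝ =>
        (∑ w, u w * ((Amat P γ *ᵥ (Φ *ᵥ x)) w - bvec r w)) / (1 - γ)) ''
        Utilde P α γ Φ (detPol p)))) := by
      refine ⟨∑ s, α s * vVal P r γ (detPol p) s, ?_⟩
      rintro _ ⟨y, rfl⟩
      exact aux_upper P r α γ Φ hP hPsum hα hαsum hγ0 hγ1 (detPol p) hpπ y
    refine le_trans ?_ (le_ciSup hbd x)
    refine sub_le_sub_left ?_ _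
    refine Real.sSup_le ?_ (div_nonneg hε0 hγ.le)
    rintro _ ⟨u, hu, rfl⟩
    refine div_le_div_of_nonneg_right ?_ hγ.le
    have hu1 : ∑ w, u w = 1 := by
      obtain ⟨y, hy⟩ := hone
      have := aux_pair P α γ Φ _ u hu y
      simp only [hy, aux_Amat, mul_one, hPsum, hαsum, ← Finset.sum_mul] at this
      exact mul_right_cancel₀ hγ.ne' (by linarith)
    calc _ ≤ ∑ w, u w * ε := Finset.sum_le_sum fun w _ => ?_
      _ = ε := by rw [← Finset.sum_mul, hu1, one_mul]
    by_cases hw : w.2 = p w.1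
    · refine mul_le_mul_of_nonneg_left ?_ (hu.1 w)
      have h1 := hp w.1
      have h2 := (abs_le.1 (hεs w.1)).2
      rw [aux_Amat, bvec, hw]
      linarith
    · have h1 := hu.2.2 w
      simp only [detPol, if_neg hw] at h1
      have : u w = 0 := le_antisymm h1 (hu.1 w)
      simp [this]
  have hup : rhoTilde P r α γ Φ πb ≤ ∑ s, α s * vVal P r γ πb s :=
    ciSup_le fun y => aux_upper P r α γ Φ hP hPsum hα hαsum hγ0 hγ1 πb hπb y
  have hmid := hopt _ hpmem
  have habs : ∑ s, α s * |vstar s - vVal P r γ πb s| =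
      ∑ s, α s * vstar s - ∑ s, α s * vVal P r γ πb s := by
    rw [← Finset.sum_sub_distrib]
    exact Finset.sum_congr rfl fun s _ => by rw [abs_of_nonneg (hdom s)]; ring
  have hc : 0 ≤ ∑ s, α s * (v s - vstar s + ε / (1 - γ)) :=
    Finset.sum_nonneg fun s _ => mul_nonneg (hα s) (hclose s)
  simp only [mul_sub, mul_add, Finset.sum_sub_distrib, Finset.sum_add_distrib,
      ← Finset.sum_mul, hαsum, one_mul] at hc
  have : 2 / (1 - γ) * ε = ε / (1 - γ) + ε / (1 - γ) := by ring
  rw [habs, this]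
  linarith
end

section
/- Suppose there exist a probability measure μ on S and a constant C > 0 such that P(s,a,s') ≤ C·μ(s') for all s,s' ∈ S and a ∈ A. Then C ≥ 1, and for every randomized policy π and every state s, the state occupancy frequency satisfies d_π(s) ≤ γ·C·μ(s) + (1−γ)·α(s) ≤ C·σ(s), where σ = γ·μ + (1−γ)·α. -/
open Matrix BigOperators

open DRADP

/-- under the concentration-coefficient assumption `P(s,a,s') ≤ C·μ(s')`,
one has `C ≥ 1` and `d_π ≤ γ·C·μ + (1−γ)·α ≤ C·σ` with `σ = γ·μ + (1−γ)·α`. -/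
theorem occupancy_concentration_bound {S A : Type*} [Fintype S] [Fintype A]
    [Nonempty S] [Nonempty A] [DecidableEq S]
    (P : S → A → S → ℝ) (α : S → ℝ) (γ : ℝ)
    (hP : ∀ s a s', 0 ≤ P s a s') (hPsum : ∀ s a, ∑ s', P s a s' = 1)
    (hα : ∀ s, 0 ≤ α s) (hαsum : ∑ s, α s = 1)
    (hγ0 : 0 ≤ γ) (hγ1 : γ < 1)
    (μ : S → ℝ) (hμ0 : ∀ s, 0 ≤ μ s) (hμ1 : ∑ s, μ s = 1)
    (C : ℝ) (hC : 0 < C)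
    (hconc : ∀ s a s', P s a s' ≤ C * μ s') :
    1 ≤ C ∧
    ∀ π : S → A → ℝ, isPolicy π → ∀ s,
      dOcc P α γ π s ≤ γ * C * μ s + (1 - γ) * α s ∧
      γ * C * μ s + (1 - γ) * α s ≤ C * (γ * μ s + (1 - γ) * α s) := by
  have h1C : 1 ≤ C := by
    obtain ⟨s₀⟩ := ‹Nonempty S›
    obtain ⟨a₀⟩ := ‹Nonempty A›
    calc (1 : ℝ) = ∑ s', P s₀ a₀ s' := (hPsum s₀ a₀).symm
      _ ≤ ∑ s', C * μ s' := Finset.sum_le_sum fun s' _ => hconc s₀ a₀ s'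
      _ = C := by rw [← Finset.mul_sum, hμ1, mul_one]
  refine ⟨h1C, fun π hπ s => ⟨?_, ?_⟩⟩
  · obtain ⟨hπ0, hπ1⟩ := hπ
    have hM0 : ∀ i j, 0 ≤ Pmat P π i j := fun i j =>
      Finset.sum_nonneg fun a _ => mul_nonneg (hP i a j) (hπ0 i a)
    have hMC : ∀ i j, Pmat P π i j ≤ C * μ j := fun i j => by
      calc Pmat P π i j = ∑ a, P i a j * π i a := rfl
        _ ≤ ∑ a, C * μ j * π i a := Finset.sum_le_sum fun a _ =>
            mul_le_mul_of_nonneg_right (hconc i a j) (hπ0 i a)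
        _ = C * μ j := by rw [← Finset.mul_sum, hπ1, mul_one]
    have hM1 : ∀ i, ∑ j, Pmat P π i j = 1 := fun i => by
      calc ∑ j, Pmat P π i j = ∑ j, ∑ a, P i a j * π i a := rfl
        _ = ∑ a, ∑ j, P i a j * π i a := Finset.sum_comm
        _ = ∑ a, π i a := by
            refine Finset.sum_congr rfl fun a _ => ?_
            rw [← Finset.sum_mul, hPsum, one_mul]
        _ = 1 := hπ1 i
    set x : ℕ → S → ℝ := fun t => ((Pmat P π)ᵀ ^ t) *ᵥ α with hx
    have hx0 : x 0 = α := by simp [hx]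
    have hxs : ∀ t j, x (t + 1) j = ∑ i, Pmat P π i j * x t i := fun t j => by
      simp only [hx]
      rw [pow_succ', ← Matrix.mulVec_mulVec]
      rfl
    have hxn : ∀ t, (∀ i, 0 ≤ x t i) ∧ ∑ i, x t i = 1 := by
      intro t
      induction t with
      | zero => rw [hx0]; exact ⟨hα, hαsum⟩
      | succ t ih =>
        refine ⟨fun j => ?_, ?_⟩
        · rw [hxs]
          exact Finset.sum_nonneg fun i _ => mul_nonneg (hM0 i j) (ih.1 i)
        · simp only [hxs]
          rw [Finset.sum_comm]
          simp only [← Finset.sum_mul, hM1, one_mul]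
          exact ih.2
    have hxC : ∀ t j, x (t + 1) j ≤ C * μ j := fun t j => by
      rw [hxs]
      calc ∑ i, Pmat P π i j * x t i ≤ ∑ i, C * μ j * x t i :=
            Finset.sum_le_sum fun i _ => mul_le_mul_of_nonneg_right (hMC i j) ((hxn t).1 i)
        _ = C * μ j := by rw [← Finset.mul_sum, (hxn t).2, mul_one]
    have hg := summable_geometric_of_lt_one hγ0 hγ1
    have hb : Summable fun t : ℕ => γ ^ t * (γ * (C * μ s)) := hg.mul_right _
    have hle : ∀ t : ℕ, γ ^ (t + 1) * x (t + 1) s ≤ γ ^ t * (γ * (C * μ s)) := fun t => by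
      rw [pow_succ, mul_assoc]
      exact mul_le_mul_of_nonneg_left (mul_le_mul_of_nonneg_left (hxC t s) hγ0)
        (pow_nonneg hγ0 t)
    have hsum1 : Summable fun t : ℕ => γ ^ (t + 1) * x (t + 1) s :=
      Summable.of_nonneg_of_le
        (fun t => mul_nonneg (pow_nonneg hγ0 _) ((hxn _).1 s)) hle hb
    have hsum : Summable fun t : ℕ => γ ^ t * x t s :=
      (summable_nat_add_iff (f := fun t : ℕ => γ ^ t * x t s) 1).1 hsum1
    have hT : ∑' t : ℕ, γ ^ t * x t s ≤ α s + (1 - γ)⁻¹ * (γ * (C * μ s)) := by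
      rw [hsum.tsum_eq_zero_add, hx0, pow_zero, one_mul,
        ← tsum_geometric_of_lt_one hγ0 hγ1, ← tsum_mul_right]
      exact add_le_add le_rfl (hsum1.tsum_le_tsum hle hb)
    have hpos : 0 < 1 - γ := by linarith
    calc dOcc P α γ π s = (1 - γ) * ∑' t : ℕ, γ ^ t * x t s := rfl
      _ ≤ (1 - γ) * (α s + (1 - γ)⁻¹ * (γ * (C * μ s))) :=
          mul_le_mul_of_nonneg_left hT hpos.le
      _ = γ * C * μ s + (1 - γ) * α s := by
          field_simp
          ring
  · have : 0 ≤ (C - 1) * ((1 - γ) * α s) :=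
      mul_nonneg (by linarith) (mul_nonneg (by linarith) (hα s))
    linarith
end

section
/- Suppose there exist a probability measure μ on S and a constant C > 0 such that P(s,a,s') ≤ C·μ(s') for all s,s',a, and set σ = γ·μ + (1−γ)·α. Assume the all-ones vector 1 lies in the column span of Φ, let G = {π ∈ Π_D : π greedy with respect to some v ∈ Ṽ}, let Π̃ satisfy G ⊆ Π̃ ⊆ Π_R, and let π̄ ∈ Π̃ satisfy ρ̃_S(π̄) ≥ ρ̃_S(π) for all π ∈ Π̃. Then for every v ∈ Ṽ: ρ* − ρ(π̄) ≤ (2C/(1−γ))·‖v − Lv‖_{1,σ}, where ‖x‖_{1,σ} = ∑_s σ(s)·|x(s)|. -/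
open Matrix BigOperators

open DRADP

namespace DRADP

/-- Smoothness-restricted approximate occupancy frequencies `Ũ_S(π)`. -/
def UtildeS {S A K : Type*} [Fintype S] [Fintype A] [Fintype K] [DecidableEq S]
    (P : S → A → S → ℝ) (α : S → ℝ) (γ : ℝ) (Φ : Matrix S K ℝ)
    (C : ℝ) (σ : S → ℝ) (π : S → A → ℝ) : Set (S × A → ℝ) :=
  {u | u ∈ Utilde P α γ Φ π ∧ ∀ s, ∑ a, u (s, a) ≤ C * σ s}

/-- The smoothness-restricted robust return estimate `ρ̃_S(π)`. -/
noncomputable def rhoTildeS {S A K : Type*} [Fintype S] [Fintype A] [Fintype K] [DecidableEq S]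
    (P : S → A → S → ℝ) (r : S → A → ℝ) (α : S → ℝ) (γ : ℝ) (Φ : Matrix S K ℝ)
    (C : ℝ) (σ : S → ℝ) (π : S → A → ℝ) : ℝ :=
  ⨆ x : K → ℝ, (∑ s, α s * (Φ *ᵥ x) s -
    sSup ((fun u : S × A → ℝ =>
      (∑ w, u w * ((Amat P γ *ᵥ (Φ *ᵥ x)) w - bvec r w)) / (1 - γ)) ''
      UtildeS P α γ Φ C σ π))

end DRADP

namespace DRADP

theorem pow_stoch {S : Type*} [Fintype S] [DecidableEq S] (M : Matrix S S ℝ)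
    (h0 : ∀ i j, 0 ≤ M i j) (h1 : ∀ i, ∑ j, M i j = 1) (t : ℕ) :
    (∀ i j, 0 ≤ (M ^ t) i j) ∧ ∀ i, ∑ j, (M ^ t) i j = 1 := by
  induction t with
  | zero =>
    refine ⟨fun i j => ?_, fun i => ?_⟩
    · rw [pow_zero, Matrix.one_apply]; split_ifs <;> norm_num
    · simp [Matrix.one_apply]
  | succ k ih =>
    obtain ⟨ih0, ih1⟩ := ih
    refine ⟨fun i j => ?_, fun i => ?_⟩
    · rw [pow_succ, Matrix.mul_apply]
      exact Finset.sum_nonneg fun l _ => mul_nonneg (ih0 i l) (h0 l j)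
    · simp only [pow_succ, Matrix.mul_apply]
      rw [Finset.sum_comm]
      simp only [← Finset.mul_sum, h1, mul_one, ih1]

theorem summ_pow {S : Type*} [Fintype S] [DecidableEq S] (M : Matrix S S ℝ)
    (h0 : ∀ i j, 0 ≤ M i j) (h1 : ∀ i, ∑ j, M i j = 1) (γ : ℝ) (hγ0 : 0 ≤ γ) (hγ1 : γ < 1) :
    Summable (fun t : ℕ => (γ • M) ^ t) := by
  refine Pi.summable.2 fun i => Pi.summable.2 fun j => ?_
  refine Summable.of_nonneg_of_le (fun t => ?_) (fun t => ?_)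
    (summable_geometric_of_lt_one hγ0 hγ1)
  · rw [smul_pow, Matrix.smul_apply, smul_eq_mul]
    exact mul_nonneg (pow_nonneg hγ0 t) ((pow_stoch M h0 h1 t).1 i j)
  · rw [smul_pow, Matrix.smul_apply, smul_eq_mul]
    refine mul_le_of_le_one_right (pow_nonneg hγ0 t) ?_
    rw [← (pow_stoch M h0 h1 t).2 i]
    exact Finset.single_le_sum (fun l _ => (pow_stoch M h0 h1 t).1 i l) (Finset.mem_univ j)

theorem neumann {S : Type*} [Fintype S] [DecidableEq S] (Q : Matrix S S ℝ)
    (hs : Summable (fun t : ℕ => Q ^ t)) :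
    (∑' t : ℕ, Q ^ t) = 1 + Q * (∑' t : ℕ, Q ^ t) ∧
    (∑' t : ℕ, Q ^ t) = 1 + (∑' t : ℕ, Q ^ t) * Q := by
  constructor
  · conv_lhs => rw [hs.tsum_eq_zero_add]
    rw [pow_zero, ← hs.tsum_mul_left]
    simp only [pow_succ']
  · conv_lhs => rw [hs.tsum_eq_zero_add]
    rw [pow_zero, ← hs.tsum_mul_right]
    simp only [pow_succ]

theorem occ_exists {S : Type*} [Fintype S] [DecidableEq S] (M : Matrix S S ℝ)
    (h0 : ∀ i j, 0 ≤ M i j) (h1 : ∀ i, ∑ j, M i j = 1) (γ : ℝ) (hγ0 : 0 ≤ γ) (hγ1 : γ < 1)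
    (α μ : S → ℝ) (hα : ∀ s, 0 ≤ α s) (hαsum : ∑ s, α s = 1) (hμ1 : ∑ s, μ s = 1)
    (C : ℝ) (hM : ∀ s s', M s s' ≤ C * μ s') :
    ∃ d : S → ℝ, (∀ s, 0 ≤ d s) ∧ (∀ s, d s ≤ 1) ∧
      (∀ s, d s ≤ C * (γ * μ s + (1 - γ) * α s)) ∧
      ∀ v : S → ℝ, ∑ s, d s * (v s - γ * ∑ s', M s s' * v s') = (1 - γ) * ∑ s, α s * v s := by
  have hs := summ_pow M h0 h1 γ hγ0 hγ1
  obtain ⟨-, hN⟩ := neumann _ hs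
  have hN0 : ∀ i j, 0 ≤ (∑' t : ℕ, (γ • M) ^ t) i j := by
    intro i j
    have e : (∑' t : ℕ, (γ • M) ^ t) i j = ∑' t : ℕ, ((γ • M) ^ t) i j := by
      have h := Pi.hasSum.1 (Pi.hasSum.1 hs.hasSum i) j
      exact h.tsum_eq.symm
    rw [e]
    refine tsum_nonneg fun t => ?_
    rw [smul_pow, Matrix.smul_apply, smul_eq_mul]
    exact mul_nonneg (pow_nonneg hγ0 t) ((pow_stoch M h0 h1 t).1 i j)
  generalize (∑' t : ℕ, (γ • M) ^ t) = N at hN hN0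
  have hg : 0 < 1 - γ := by linarith
  set d : S → ℝ := fun s => (1 - γ) * (α ᵥ* N) s with hd
  have hd0 : ∀ s, 0 ≤ d s := fun s => mul_nonneg hg.le
    (Finset.sum_nonneg fun i _ => mul_nonneg (hα i) (hN0 i s))
  have key : ∀ v : S → ℝ,
      ∑ s, d s * (v s - γ * ∑ s', M s s' * v s') = (1 - γ) * ∑ s, α s * v s := by
    intro v
    have e1 : ∑ s, d s * (v s - γ * ∑ s', M s s' * v s')
        = (1 - γ) * ((α ᵥ* N) ⬝ᵥ (v - (γ • M) *ᵥ v)) := by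
      simp only [hd, dotProduct, Finset.mul_sum, Matrix.smul_mulVec, Pi.sub_apply,
        Pi.smul_apply, smul_eq_mul, Matrix.mulVec, mul_assoc]
    rw [e1, ← Matrix.dotProduct_mulVec, Matrix.mulVec_sub, Matrix.mulVec_mulVec]
    have e2 : N *ᵥ v - (N * (γ • M)) *ᵥ v = v := by
      conv_lhs => enter [1]; rw [hN]
      rw [Matrix.add_mulVec, Matrix.one_mulVec]; abel
    rw [e2]; rfl
  have hsum : ∑ s, d s = 1 := by
    have h := key (fun _ => 1)
    simp only [mul_one, h1, hαsum, ← Finset.sum_mul] at h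
    exact mul_right_cancel₀ hg.ne' (by linarith)
  have hC1 : 1 ≤ C := by
    have hne : Nonempty S := by
      by_contra hne
      rw [not_nonempty_iff] at hne
      simp at hαsum
    obtain ⟨s⟩ := hne
    calc (1:ℝ) = ∑ s', M s s' := (h1 s).symm
      _ ≤ ∑ s', C * μ s' := Finset.sum_le_sum fun s' _ => hM s s'
      _ = C := by rw [← Finset.mul_sum, hμ1, mul_one]
  refine ⟨d, hd0, fun s => ?_, fun s => ?_, key⟩
  · rw [← hsum]; exact Finset.single_le_sum (fun i _ => hd0 i) (Finset.mem_univ s)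
  · have h := key (fun i => if i = s then 1 else 0)
    simp only [mul_sub, Finset.sum_sub_distrib, mul_ite, mul_one, mul_zero,
      Finset.sum_ite_eq', Finset.mem_univ, if_true] at h
    have h2 : ∑ i, d i * (γ * M i s) ≤ γ * (C * μ s) := by
      calc ∑ i, d i * (γ * M i s) ≤ ∑ i, d i * (γ * (C * μ s)) :=
            Finset.sum_le_sum fun i _ =>
              mul_le_mul_of_nonneg_left (mul_le_mul_of_nonneg_left (hM i s) hγ0) (hd0 i)
        _ = γ * (C * μ s) := by rw [← Finset.sum_mul, hsum, one_mul]
    have h3 : 0 ≤ (C - 1) * ((1 - γ) * α s) :=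
      mul_nonneg (by linarith) (mul_nonneg hg.le (hα s))
    nlinarith

theorem vVal_fix {S A : Type*} [Fintype S] [Fintype A] [DecidableEq S]
    (P : S → A → S → ℝ) (r : S → A → ℝ) (γ : ℝ) (hγ0 : 0 ≤ γ) (hγ1 : γ < 1)
    (π : S → A → ℝ)
    (h0 : ∀ i j, 0 ≤ Pmat P π i j) (h1 : ∀ i, ∑ j, Pmat P π i j = 1) (s : S) :
    vVal P r γ π s - γ * ∑ s', Pmat P π s s' * vVal P r γ π s' = rvec r π s := by
  have hs := summ_pow _ h0 h1 γ hγ0 hγ1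
  obtain ⟨hN, -⟩ := neumann _ hs
  have e : vVal P r γ π = (∑' t : ℕ, (γ • Pmat P π) ^ t) *ᵥ rvec r π := by
    funext i
    have h : HasSum (fun t : ℕ => ∑ j, ((γ • Pmat P π) ^ t) i j * rvec r π j)
        (∑ j, (∑' t : ℕ, (γ • Pmat P π) ^ t) i j * rvec r π j) :=
      hasSum_sum fun j _ => (Pi.hasSum.1 (Pi.hasSum.1 hs.hasSum i) j).mul_right _
    refine Eq.trans ?_ h.tsum_eq
    refine tsum_congr fun t => ?_
    simp only [Matrix.mulVec, dotProduct, smul_pow, Matrix.smul_apply, smul_eq_mul,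
      Finset.mul_sum, mul_assoc]
  generalize (∑' t : ℕ, (γ • Pmat P π) ^ t) = N at hN e
  have h2 : vVal P r γ π = rvec r π + γ • (Pmat P π *ᵥ vVal P r γ π) := by
    conv_lhs => rw [e, hN]
    rw [Matrix.add_mulVec, Matrix.one_mulVec, ← Matrix.mulVec_mulVec, ← e, Matrix.smul_mulVec]
  have h3 := congrFun h2 s
  simp only [Pi.add_apply, Pi.smul_apply, smul_eq_mul, Matrix.mulVec, dotProduct] at h3
  linarith

theorem Pmat_det {S A : Type*} [Fintype S] [Fintype A] [DecidableEq A]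
    (P : S → A → S → ℝ) (p : S → A) (s s' : S) : Pmat P (detPol p) s s' = P s (p s) s' := by
  simp [Pmat, detPol]

theorem Pmat_props {S A : Type*} [Fintype S] [Fintype A]
    (P : S → A → S → ℝ) (hP : ∀ s a s', 0 ≤ P s a s') (hPsum : ∀ s a, ∑ s', P s a s' = 1)
    (c : S → ℝ) (hc : ∀ s a s', P s a s' ≤ c s') (π : S → A → ℝ) (hπ : isPolicy π) :
    (∀ i j, 0 ≤ Pmat P π i j) ∧ (∀ i, ∑ j, Pmat P π i j = 1) ∧
      ∀ i j, Pmat P π i j ≤ c j := by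
  refine ⟨fun i j => ?_, fun i => ?_, fun i j => ?_⟩
  · exact Finset.sum_nonneg fun a _ => mul_nonneg (hP i a j) (hπ.1 i a)
  · simp only [Pmat, Matrix.of_apply]
    rw [Finset.sum_comm]
    simp only [← Finset.sum_mul, hPsum, one_mul, hπ.2]
  · calc ∑ a, P i a j * π i a ≤ ∑ a, c j * π i a :=
          Finset.sum_le_sum fun a _ => mul_le_mul_of_nonneg_right (hc i a j) (hπ.1 i a)
      _ = c j := by rw [← Finset.mul_sum, hπ.2, mul_one]

theorem Amat_mulVec {S A : Type*} [Fintype S] [DecidableEq S]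
    (P : S → A → S → ℝ) (γ : ℝ) (v : S → ℝ) (w : S × A) :
    (Amat P γ *ᵥ v) w = v w.1 - γ * ∑ s', P w.1 w.2 s' * v s' := by
  simp [Amat, Matrix.mulVec, dotProduct, sub_mul, Finset.sum_sub_distrib, Finset.mul_sum,
    mul_assoc]

theorem sum_occ {S A : Type*} [Fintype S] [Fintype A] [DecidableEq S]
    (P : S → A → S → ℝ) (γ : ℝ) (π : S → A → ℝ) (hπ : isPolicy π) (d v : S → ℝ) :
    ∑ w : S × A, d w.1 * π w.1 w.2 * (Amat P γ *ᵥ v) w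
      = ∑ s, d s * (v s - γ * ∑ s', Pmat P π s s' * v s') := by
  rw [Fintype.sum_prod_type]
  refine Finset.sum_congr rfl fun s _ => ?_
  have e : ∑ s', Pmat P π s s' * v s' = ∑ a, π s a * ∑ s', P s a s' * v s' := by
    simp only [Pmat, Matrix.of_apply, Finset.sum_mul, Finset.mul_sum]
    rw [Finset.sum_comm]
    exact Finset.sum_congr rfl fun a _ => Finset.sum_congr rfl fun s' _ => by ring
  simp only [Amat_mulVec]
  rw [e]
  calc ∑ a, d s * π s a * (v s - γ * ∑ s', P s a s' * v s')
      = d s * ((∑ a, π s a) * v s - γ * ∑ a, π s a * ∑ s', P s a s' * v s') := by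
        rw [Finset.sum_mul, Finset.mul_sum, ← Finset.sum_sub_distrib, Finset.mul_sum]
        exact Finset.sum_congr rfl fun a _ => by ring
    _ = _ := by rw [hπ.2, one_mul]

theorem detPol_policy {S A : Type*} [Fintype A] [DecidableEq A] (p : S → A) :
    isPolicy (detPol p) := by
  refine ⟨fun s a => ?_, fun s => ?_⟩
  · unfold detPol; split_ifs <;> norm_num
  · simp [detPol]

theorem greedy_exists {S A : Type*} [Fintype S] [Fintype A] [Nonempty A]
    (P : S → A → S → ℝ) (r : S → A → ℝ) (γ : ℝ) (v : S → ℝ) :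
    ∃ p : S → A, isGreedy P r γ p v ∧
      ∀ s, bell P r γ v s = r s (p s) + γ * ∑ s', P s (p s) s' * v s' := by
  have h : ∀ s, ∃ a0, ∀ a, r s a + γ * ∑ s', P s a s' * v s'
      ≤ r s a0 + γ * ∑ s', P s a0 s' * v s' := fun s => Finite.exists_max _
  choose p hp using h
  refine ⟨p, hp, fun s => le_antisymm (ciSup_le (hp s)) ?_⟩
  exact le_ciSup (f := fun a => r s a + γ * ∑ s', P s a s' * v s')
    (Set.finite_range _).bddAbove (p s)

/-- boundedness of the inner supremum -/
theorem inner_bdd {S A K : Type*} [Fintype S] [Fintype A] [Fintype K] [DecidableEq S]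
    (P : S → A → S → ℝ) (α : S → ℝ) (γ : ℝ) (hγ1 : γ < 1) (Φ : Matrix S K ℝ)
    (C : ℝ) (σ : S → ℝ) (π : S → A → ℝ) (g : S × A → ℝ) :
    BddAbove ((fun u : S × A → ℝ => (∑ w, u w * g w) / (1 - γ)) '' UtildeS P α γ Φ C σ π) := by
  refine ⟨(∑ w : S × A, π w.1 w.2 * |g w|) / (1 - γ), ?_⟩
  rintro _ ⟨u, hu, rfl⟩
  refine div_le_div_of_nonneg_right (Finset.sum_le_sum fun w _ => ?_) (by linarith)
  exact (mul_le_mul_of_nonneg_left (le_abs_self _) (hu.1.1 w)).trans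
    (mul_le_mul_of_nonneg_right (hu.1.2.2 w) (abs_nonneg _))

end DRADP

/-- under the concentration-coefficient assumption, the `ρ̃_S`-optimal
policy `π̄` satisfies `ρ* − ρ(π̄) ≤ (2C/(1−γ))·‖v − Lv‖_{1,σ}` for all representable `v`. -/
theorem dradp_loss_bound_smooth {S A K : Type*} [Fintype S] [Fintype A] [Fintype K]
    [Nonempty A] [DecidableEq S] [DecidableEq A]
    (P : S → A → S → ℝ) (r : S → A → ℝ) (α : S → ℝ) (γ : ℝ) (Φ : Matrix S K ℝ)
    (hP : ∀ s a s', 0 ≤ P s a s') (hPsum : ∀ s a, ∑ s', P s a s' = 1)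
    (hα : ∀ s, 0 ≤ α s) (hαsum : ∑ s, α s = 1)
    (hγ0 : 0 ≤ γ) (hγ1 : γ < 1)
    (μ : S → ℝ) (hμ0 : ∀ s, 0 ≤ μ s) (hμ1 : ∑ s, μ s = 1)
    (C : ℝ) (hC : 0 < C)
    (hconc : ∀ s a s', P s a s' ≤ C * μ s')
    (σ : S → ℝ) (hσ : σ = fun s => γ * μ s + (1 - γ) * α s)
    (hone : ∃ x : K → ℝ, Φ *ᵥ x = fun _ => (1 : ℝ))
    (vstar : S → ℝ) (hvstar : bell P r γ vstar = vstar)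
    (Pset : Set (S → A → ℝ))
    (hG : greedySet P r γ Φ ⊆ Pset)
    (hR : Pset ⊆ {π | isPolicy π})
    (πb : S → A → ℝ) (hmem : πb ∈ Pset)
    (hopt : ∀ π ∈ Pset, rhoTildeS P r α γ Φ C σ π ≤ rhoTildeS P r α γ Φ C σ πb) :
    ∀ x : K → ℝ,
      (∑ s, α s * vstar s) - ret P r α γ πb
        ≤ (2 * C / (1 - γ)) * ∑ s, σ s * |(Φ *ᵥ x) s - bell P r γ (Φ *ᵥ x) s| := by
  intro x
  have hg : 0 < 1 - γ := by linarith
  -- occupancy frequencies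
  have occ : ∀ π : S → A → ℝ, isPolicy π → ∃ d : S → ℝ, (∀ s, 0 ≤ d s) ∧ (∀ s, d s ≤ 1) ∧
      (∀ s, d s ≤ C * σ s) ∧
      ∀ v : S → ℝ, ∑ s, d s * (v s - γ * ∑ s', Pmat P π s s' * v s')
        = (1 - γ) * ∑ s, α s * v s := by
    intro π hπ
    obtain ⟨h0, h1, h2⟩ := Pmat_props P hP hPsum (fun s => C * μ s) hconc π hπ
    subst hσ
    exact occ_exists _ h0 h1 γ hγ0 hγ1 α μ hα hαsum hμ1 C h2
  -- upper bound: every inner value is at most the return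
  have upper : ∀ π : S → A → ℝ, isPolicy π → ∀ y : K → ℝ, (∑ s, α s * (Φ *ᵥ y) s -
      sSup ((fun u : S × A → ℝ =>
        (∑ w, u w * ((Amat P γ *ᵥ (Φ *ᵥ y)) w - bvec r w)) / (1 - γ)) ''
        UtildeS P α γ Φ C σ π)) ≤ ret P r α γ π := by
    intro π hπ y
    obtain ⟨d, hd0, hd1, hdC, hd⟩ := occ π hπ
    obtain ⟨h0, h1, -⟩ := Pmat_props P hP hPsum (fun s => C * μ s) hconc π hπ
    have hA : ∀ v : S → ℝ, ∑ w : S × A, d w.1 * π w.1 w.2 * (Amat P γ *ᵥ v) w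
        = (1 - γ) * ∑ s, α s * v s := fun v => by rw [sum_occ P γ π hπ, hd]
    have hu : (fun w : S × A => d w.1 * π w.1 w.2) ∈ UtildeS P α γ Φ C σ π := by
      refine ⟨⟨fun w => mul_nonneg (hd0 _) (hπ.1 _ _), ?_, fun w => ?_⟩, fun s => ?_⟩
      · have e : (Amat P γ)ᵀ *ᵥ (fun w : S × A => d w.1 * π w.1 w.2)
            = fun s => (1 - γ) * α s := by
          funext s
          have h := hA (Pi.single s 1)
          simp only [Matrix.mulVec_single_one] at h
          simp only [Pi.single_apply, mul_ite, mul_one, mul_zero, Finset.sum_ite_eq',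
            Finset.mem_univ, if_true] at h
          rw [← h]
          simp only [Matrix.mulVec, dotProduct, Matrix.transpose_apply, Matrix.col_apply]
          exact Finset.sum_congr rfl fun w _ => mul_comm _ _
        rw [e]
        funext j
        simp only [Matrix.mulVec, dotProduct, Finset.mul_sum]
        exact Finset.sum_congr rfl fun w _ => by ring
      · exact mul_le_of_le_one_left (hπ.1 _ _) (hd1 _)
      · simp only [← Finset.mul_sum, hπ.2, mul_one]
        exact hdC s
    have hle := le_csSup (inner_bdd P α γ hγ1 Φ C σ π
      (fun w => (Amat P γ *ᵥ (Φ *ᵥ y)) w - bvec r w)) (Set.mem_image_of_mem _ hu)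
    have hr : ∑ w : S × A, d w.1 * π w.1 w.2 * bvec r w = (1 - γ) * ret P r α γ π := by
      unfold ret
      rw [← hd (vVal P r γ π), Fintype.sum_prod_type]
      refine Finset.sum_congr rfl fun s _ => ?_
      rw [vVal_fix P r γ hγ0 hγ1 π h0 h1 s]
      simp only [rvec, bvec, Finset.mul_sum]
      exact Finset.sum_congr rfl fun a _ => by ring
    have hval : (∑ w : S × A, d w.1 * π w.1 w.2 *
        ((Amat P γ *ᵥ (Φ *ᵥ y)) w - bvec r w)) / (1 - γ)
        = ∑ s, α s * (Φ *ᵥ y) s - ret P r α γ π := by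
      simp only [mul_sub, Finset.sum_sub_distrib]
      rw [hA, hr]; field_simp
    simp only [hval] at hle
    linarith
  have hbπ : isPolicy πb := hR hmem
  have ub : rhoTildeS P r α γ Φ C σ πb ≤ ret P r α γ πb := ciSup_le (upper πb hbπ)
  set v := Φ *ᵥ x with hv
  set E := ∑ s, σ s * |v s - bell P r γ v s| with hE
  have hσ0 : ∀ s, 0 ≤ σ s := by
    intro s; rw [hσ]
    exact add_nonneg (mul_nonneg hγ0 (hμ0 s)) (mul_nonneg hg.le (hα s))
  have hE0 : 0 ≤ E := Finset.sum_nonneg fun s _ => mul_nonneg (hσ0 s) (abs_nonneg _)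
  -- lower bound via the greedy policy
  have lb : ∑ s, α s * v s - C * E / (1 - γ) ≤ rhoTildeS P r α γ Φ C σ πb := by
    obtain ⟨p, hp, hpb⟩ := greedy_exists P r γ v
    refine le_trans ?_ (hopt (detPol p) (hG ⟨p, rfl, x, hp⟩))
    refine le_trans ?_ (le_ciSup (f := fun y : K → ℝ => (∑ s, α s * (Φ *ᵥ y) s -
      sSup ((fun u : S × A → ℝ =>
        (∑ w, u w * ((Amat P γ *ᵥ (Φ *ᵥ y)) w - bvec r w)) / (1 - γ)) ''
        UtildeS P α γ Φ C σ (detPol p)))) ⟨_, Set.forall_mem_range.2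
          (upper _ (detPol_policy p))⟩ x)
    refine sub_le_sub_left (Real.sSup_le ?_ (div_nonneg (mul_nonneg hC.le hE0) hg.le)) _
    rintro _ ⟨u, ⟨⟨hu0, -, hu1⟩, huC⟩, rfl⟩
    refine div_le_div_of_nonneg_right ?_ hg.le
    rw [Fintype.sum_prod_type, hE, Finset.mul_sum]
    refine Finset.sum_le_sum fun s _ => ?_
    calc ∑ a, u (s, a) * ((Amat P γ *ᵥ v) (s, a) - bvec r (s, a))
        ≤ ∑ a, u (s, a) * |v s - bell P r γ v s| := by
          refine Finset.sum_le_sum fun a _ => ?_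
          by_cases ha : a = p s
          · subst ha
            refine mul_le_mul_of_nonneg_left ?_ (hu0 _)
            refine le_trans (le_of_eq ?_) (le_abs_self _)
            rw [Amat_mulVec, hpb]; simp only [bvec]; ring
          · have h0 : u (s, a) = 0 := by
              refine le_antisymm ((hu1 (s, a)).trans (le_of_eq ?_)) (hu0 _)
              simp [detPol, ha]
            rw [h0, zero_mul, zero_mul]
      _ = (∑ a, u (s, a)) * |v s - bell P r γ v s| := by rw [Finset.sum_mul]
      _ ≤ C * σ s * |v s - bell P r γ v s| :=
          mul_le_mul_of_nonneg_right (huC s) (abs_nonneg _)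
      _ = C * (σ s * |v s - bell P r γ v s|) := by ring
  -- the optimal value versus v
  have opt : ∑ s, α s * vstar s - ∑ s, α s * v s ≤ C * E / (1 - γ) := by
    obtain ⟨p, -, hpb⟩ := greedy_exists P r γ vstar
    rw [hvstar] at hpb
    obtain ⟨d, hd0, -, hdC, hd⟩ := occ _ (detPol_policy p)
    rw [le_div_iff₀ hg]
    have e1 := hd vstar
    have e2 := hd v
    have : ∑ s, d s * (vstar s - γ * ∑ s', Pmat P (detPol p) s s' * vstar s')
        - ∑ s, d s * (v s - γ * ∑ s', Pmat P (detPol p) s s' * v s') ≤ C * E := by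
      rw [← Finset.sum_sub_distrib, hE, Finset.mul_sum]
      refine Finset.sum_le_sum fun s _ => ?_
      simp only [Pmat_det]
      have hb : r s (p s) + γ * ∑ s', P s (p s) s' * v s' ≤ bell P r γ v s :=
        le_ciSup (f := fun a => r s a + γ * ∑ s', P s a s' * v s')
          (Set.finite_range _).bddAbove (p s)
      have hab := neg_abs_le (v s - bell P r γ v s)
      have hps := hpb s
      rw [← mul_sub]
      calc _ ≤ d s * |v s - bell P r γ v s| :=
            mul_le_mul_of_nonneg_left (by linarith) (hd0 s)
        _ ≤ C * σ s * |v s - bell P r γ v s| :=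
            mul_le_mul_of_nonneg_right (hdC s) (abs_nonneg _)
        _ = _ := by ring
    rw [e1, e2] at this
    linarith
  have e : 2 * C / (1 - γ) * E = C * E / (1 - γ) + C * E / (1 - γ) := by ring
  rw [e]
  linarith
end
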